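/- For all integers n ≥ 1 one has q_n ∈ ℤ, 2 D_n^5 p_n ∈ ℤ, and 2 D_n^3 p̃_n ∈ ℤ, where D_n denotes the least common multiple of the numbers 1, 2, …, n. -/

import Mathlib

noncomputable section

open Filter

/-- `a₀(n)` from recursion (1). -/
def a0 (x : ℚ) : ℚ := 41218*x^3 - 48459*x^2 + 20010*x - 2871

/-- `a₁(n)` from recursion (1). -/
def a1 (x : ℚ) : ℚ := 2*(48802112*x^9 + 89030880*x^8 + 36002654*x^7 - 24317344*x^6
  - 19538418*x^5 + 1311365*x^4 + 3790503*x^3 + 460056*x^2 - 271701*x - 60291)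

/-- `a₂(n)` from recursion (1). -/
def a2 (x : ℚ) : ℚ := 3874492*x^8 - 2617900*x^7 - 3144314*x^6 + 2947148*x^5
  + 647130*x^4 - 1182926*x^3 + 115771*x^2 + 170716*x - 44541

/-- The third-order difference equation (1), imposed for all integers `n ≥ 2`. -/
def Rec1 (y : ℕ → ℚ) : Prop := ∀ n : ℕ, 2 ≤ n →
  ((n : ℚ) + 1)^6 * a0 (n : ℚ) * y (n+1) + a1 (n : ℚ) * y n
    - 4*(2*(n : ℚ) - 1) * a2 (n : ℚ) * y (n-1)
    - 4*((n : ℚ) - 1)^4*(2*(n : ℚ) - 1)*(2*(n : ℚ) - 3) * a0 ((n : ℚ) + 1) * y (n-2) = 0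

/-- `Dlcm n` is the least common multiple of `1, 2, …, n`. -/
def Dlcm (n : ℕ) : ℕ := (Finset.Icc 1 n).lcm id

abbrev DN := DualNumber ℚ
abbrev KK := DualNumber DN

def iy : DN →+* KK := TrivSqZeroExt.inlHom DN DN

def ix : DN →+* KK where
  toFun a := TrivSqZeroExt.inl (TrivSqZeroExt.inl a.fst) + TrivSqZeroExt.inr (TrivSqZeroExt.inl a.snd)
  map_one' := by ext <;> simp
  map_zero' := by ext <;> simp
  map_mul' a b := by ext <;> simp
  map_add' a b := by ext <;> simp

def kap : ℚ →+* KK := iy.comp (TrivSqZeroExt.inlHom ℚ ℚ)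

def TT : KK →+ ℚ where
  toFun u := u.snd.snd
  map_zero' := by simp
  map_add' a b := by simp

theorem TT_apply (u : KK) : TT u = u.snd.snd := rfl
theorem ix_apply (a : DN) : ix a = TrivSqZeroExt.inl (TrivSqZeroExt.inl a.fst) +
  TrivSqZeroExt.inr (TrivSqZeroExt.inl a.snd) := rfl
theorem iy_apply (a : DN) : iy a = TrivSqZeroExt.inl a := rfl
theorem kap_apply (a : ℚ) : kap a = TrivSqZeroExt.inl (TrivSqZeroExt.inl a) := rfl

theorem TT_ix_iy (a b : DN) : TT (ix a * iy b) = a.snd * b.snd := by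
  rw [TT_apply, ix_apply, iy_apply]
  simp [mul_comm]

theorem TT_kap (c : ℚ) (u : KK) : TT (kap c * u) = c * TT u := by
  rw [TT_apply, kap_apply, TT_apply]
  simp

def ee : DN := DualNumber.eps

theorem ee_sq : ee * ee = 0 := by simp [ee]

def Sx (k : ℕ) : DN := (k : DN) + ee

/-- double-pole weight -/
def ww (m k : ℕ) : DN :=
  TrivSqZeroExt.inl (((m.choose k : ℚ) / (m.factorial : ℚ)) ^ 2) +
  TrivSqZeroExt.inr (((m.choose k : ℚ) / (m.factorial : ℚ)) ^ 2 * (2 * (harmonic (m - k) - harmonic k)))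

theorem fst_ww (m k : ℕ) : (ww m k).fst = ((m.choose k : ℚ) / (m.factorial : ℚ)) ^ 2 := by
  simp [ww]
theorem snd_ww (m k : ℕ) : (ww m k).snd =
   ((m.choose k : ℚ) / (m.factorial : ℚ)) ^ 2 * (2 * (harmonic (m - k) - harmonic k)) := by
  simp [ww]

theorem fst_Sx (k : ℕ) : (Sx k).fst = k := by simp [Sx, ee]
theorem snd_Sx (k : ℕ) : (Sx k).snd = 1 := by simp [Sx, ee]

theorem ww_zero {m k : ℕ} (h : m < k) : ww m k = 0 := by
  ext <;> simp [fst_ww, snd_ww, Nat.choose_eq_zero_of_lt h]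

theorem ww_rel1 (m k : ℕ) : ww (m+1) k * (Sx k - ((m : DN)+1))^2 = ww m k := by
  rcases lt_trichotomy k (m+1) with h | h | h
  · obtain ⟨d, rfl⟩ : ∃ d, m = k + d := ⟨m - k, by omega⟩
    have h1 : ((k+d).choose k : ℚ) * (k+d+1) = ((k+d+1).choose k) * (d+1) := by
      have := Nat.choose_mul_succ_eq (k+d) k
      have e : k + d + 1 - k = d + 1 := by omega
      rw [e] at this
      exact_mod_cast this
    have h2 : ((k+d+1).factorial : ℚ) = (k+d+1) * ((k+d).factorial : ℚ) := by
      rw [Nat.factorial_succ]; push_cast; ring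
    have e1 : k + d + 1 - k = d + 1 := by omega
    have e2 : k + d - k = d := by omega
    have hd : (d:ℚ)+1 ≠ 0 := by positivity
    have hkd : (k:ℚ)+d+1 ≠ 0 := by positivity
    have hf : ((k+d).factorial : ℚ) ≠ 0 := by positivity
    have key : (((k+d+1).choose k : ℚ) / ((k+d+1).factorial : ℚ)) =
        (((k+d).choose k : ℚ) / ((k+d).factorial : ℚ)) / (d+1) := by
      rw [h2]; field_simp; linarith
    rw [pow_two]
    ext
    · simp only [TrivSqZeroExt.fst_mul, fst_ww, TrivSqZeroExt.fst_sub, fst_Sx, key]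
      simp
      field_simp
      ring
    · simp only [TrivSqZeroExt.fst_mul, TrivSqZeroExt.snd_mul, fst_ww, snd_ww, TrivSqZeroExt.fst_sub, TrivSqZeroExt.snd_sub, fst_Sx, snd_Sx, key, e1, e2, harmonic_succ]
      simp
      field_simp
      ring
  · subst h
    rw [ww_zero (Nat.lt_succ_self m)]
    have : (Sx (m+1) - ((m:DN)+1)) = ee := by simp [Sx]
    rw [this, pow_two, ee_sq, mul_zero]
  · rw [ww_zero h, ww_zero (by omega), zero_mul]

theorem ww_rel2 (m k : ℕ) : ww m (k+1) * (Sx (k+1))^2 = ww m k * (Sx k - (m : DN))^2 := by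
  rcases lt_trichotomy k m with h | h | h
  · obtain ⟨d, rfl⟩ : ∃ d, m = k + d + 1 := ⟨m - k - 1, by omega⟩
    have h1 : ((k+d+1).choose (k+1) : ℚ) * (k+1) = ((k+d+1).choose k) * (d+1) := by
      have := Nat.choose_succ_right_eq (k+d+1) k
      have e : k + d + 1 - k = d + 1 := by omega
      rw [e] at this
      exact_mod_cast this
    have e1 : k + d + 1 - k = d + 1 := by omega
    have e2 : k + d + 1 - (k+1) = d := by omega
    have hd : (d:ℚ)+1 ≠ 0 := by positivity
    have hk : (k:ℚ)+1 ≠ 0 := by positivity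
    have hf : ((k+d+1).factorial : ℚ) ≠ 0 := by positivity
    have key : ((k+d+1).choose (k+1) : ℚ) = ((k+d+1).choose k) * (d+1) / (k+1) := by
      field_simp; linarith
    rw [pow_two, pow_two]
    ext
    · simp only [TrivSqZeroExt.fst_mul, fst_ww, TrivSqZeroExt.fst_sub, fst_Sx, key]
      simp
      field_simp
      ring
    · simp only [TrivSqZeroExt.fst_mul, TrivSqZeroExt.snd_mul, fst_ww, snd_ww, TrivSqZeroExt.fst_sub, TrivSqZeroExt.snd_sub, fst_Sx, snd_Sx, key, e1, e2, harmonic_succ]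
      simp
      field_simp
      ring
  · subst h
    rw [ww_zero (Nat.lt_succ_self k)]
    have : (Sx k - (k:DN)) = ee := by simp [Sx]
    rw [this, pow_two ee, ee_sq, mul_zero, zero_mul]
  · rw [ww_zero h, ww_zero (by omega), zero_mul, zero_mul]
/-- Coefficients (in `n`, lowest degree first) of the certificate polynomial at `s^i t^j`. -/
def cf : ℕ → ℕ → List ℤ
  | 0, 0 => [-397380, -10933392, 84313256, 24912142, -871628452, 330192854, 3958957700, -1740088062,
      -9698298778, 3133917604, 13170438452, -2653829346, -10326134596, 1177554922, 4782117408,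
      -296926894, -1099367610, 35200172]
  | 0, 1 => [702842, 26387539, -176364291, -7597015, 1449362387, -1013443282, -4670015504, 4092512110,
      6071201084, -6786401729, -865866891, 6362626197, -2370973709, -2716934328, 1857614062,
      -202643900, -1295659980, 245494408]
  | 0, 2 => [-17064, -5155660, -27034417, -32701106, 664740253, 338169024, -4364013916, -1321029764,
      11886057730, 3966811380, -9754548225, -201598890, 384895553, -5512661928, -1464625314,
      1922585760, -245494408]
  | 0, 3 => [297238, -25310029, 225640808, -63815861, -2000097738, 1510725112, 7156035604,
      -5226125998, -11584541722, 7570497871, 4962880236, -12967914293, -6694806370, 4243532966,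
      1841633608, -245494408]
  | 0, 4 => [-1765132, 4270450, -5665725, 135402596, -99119583, -1443525606, 1201366953, 5825444028,
      -3340563753, -11270267252, 1833228688, 8287280240, 412361464, -2029436184, 490988816]
  | 0, 5 => [1179496, 10741092, -100889631, -56865508, 856745789, 244421898, -2950488851, -1600476156,
      3636900623, 4156350946, 1980147710, 366551792, -404898896, -490988816]
  | 1, 0 => [529840, 14842776, -104852080, -79436300, 1083579920, 49384558, -4835643622, 124504378,
      11069714668, 497458908, -12884666704, -563518104, 8596258724, -41651610, -3469506330,
      243909802, 544585584, -245494408]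
  | 1, 1 => [-484832, -36462112, 204931388, -8360854, -1632489718, 1879632554, 4953598106,
      -9358008374, -6335023694, 21686079282, 5416326034, -23445197320, -5862467188, 10050414148,
      1127305000, -2650907820, 245494408]
  | 1, 2 => [906150, 33291055, -77778745, 43228253, -6113995, -1892317008, 3114634946, 9391270842,
      -11401610778, -22119663657, 5966720273, 10671362573, -3726418769, -2764173462, 1592546550,
      -122747204]
  | 1, 3 => [-2834002, -21752827, 2397735, 282946187, 348343941, -1518187826, -2910794969, 3351751930,
      9587834559, 1381430571, -5991881110, -718548845, 1510965794, 224013146, 122747204]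
  | 1, 4 => [2280224, 21014500, -105973322, -242376028, 831659684, 1467857896, -2503866872,
      -5366149536, 1348229008, 8262773900, 3758330586, -2672502212, -1281151244, 245494408]
  | 2, 1 => [-678436, 1970950, 56715644, -21614535, -657071971, -69450036, 3370658324, 1770775488,
      -8421649964, -8257324456, 6635267258, 10061800683, -421213373, -3854399706, -562027482,
      368241612]
  | 2, 2 => [-1543370, -1275769, -107251717, 45648767, 1380137864, -7801806, -6945625978, -2846766996,
      15904786914, 14213778977, -7076113165, -9028059283, 979472056, 1390097102, -368241612]
  | 2, 3 => [3199358, 417149, 69500635, -118640464, -929360231, 832275256, 4571171307, -1111993782,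
      -10600724135, -4963377785, 4540458666, 2940034882, -635897936, -245494408]
  | 2, 4 => [14748, -9237142, 7855567, 101187272, -14709497, -504832750, -320899433, 1254517888,
      1837842153, -483322908, -1820424778, -293485528, 245494408]
  | 2, 5 => [-1124760, 5761208, 1981451, -48537158, 9678737, 175703650, 34894867, -312846546,
      -386032097, 10866762, 386906682, 122747204]
  | 3, 2 => [2856066, -1966267, -47674913, 23287196, 322894762, -70509382, -1101847746, -107241092,
      1753904206, 465440085, -1272606053, -431757744, 342473678, 122747204]
  | 3, 3 => [-3483426, -1787649, 75188087, -6245040, -542671253, 53212146, 1847315639, 185754126,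
      -2808039145, -643172857, 1772148782, 440022202, -368241612]
  | 3, 5 => [494900, -1819860, -140194, 11390724, -14309950, -21238888, 50887098, -2042500, -55453806,
      32232476]
  | 4, 0 => [-132460, -3909384, 20538824, 54753838, -210476964, -381172784, 855914392, 1601453984,
      -1260819652, -3437912916, -492995032, 2404436882, 1333465300, -237649620, -245494408]
  | 4, 1 => [460426, 8898383, -61667237, -98156488, 591942830, 612762514, -2283554030, -2603658940,
      3322752494, 5382444803, 529579091, -1787721388, -216703078, 368241612]
  | 4, 2 => [-1407022, -3361975, 69220360, 15990362, -606316876, -144378922, 2300649800, 1295607904,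
      -3593754906, -3913044479, -248036864, 940464422, 122747204]
  | 4, 3 => [966392, -4588932, -3219785, 43191746, 3850337, -174361258, -70996941, 342787006,
      411377063, -56498430, -369759994, -122747204]
  | 4, 5 => [-19796, -34104, 90494, 142158, -181068, -204972, 192806, 96918, -82436]
  | _, _ => []

/-- Horner evaluation. -/
def hv {R : Type*} [CommRing R] (n : R) : List ℤ → R
  | [] => 0
  | c :: l => (c : R) + n * hv n l

def XX {R : Type*} [CommRing R] (n s t : R) : R :=
  ∑ i ∈ Finset.range 5, ∑ j ∈ Finset.range 6, hv n (cf i j) * s^i * t^j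

def c0 {R : Type*} [CommRing R] (x : R) : R := 41218*x^3 - 48459*x^2 + 20010*x - 2871
def c1 {R : Type*} [CommRing R] (x : R) : R :=
  2*(48802112*x^9 + 89030880*x^8 + 36002654*x^7 - 24317344*x^6
  - 19538418*x^5 + 1311365*x^4 + 3790503*x^3 + 460056*x^2 - 271701*x - 60291)
def c2 {R : Type*} [CommRing R] (x : R) : R :=
  3874492*x^8 - 2617900*x^7 - 3144314*x^6 + 2947148*x^5
  + 647130*x^4 - 1182926*x^3 + 115771*x^2 + 170716*x - 44541

/-- Lists as polynomials: addition. -/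
def ladd {A : Type} (f : A → A → A) : List A → List A → List A
  | [], b => b
  | x :: a, [] => x :: a
  | x :: a, y :: b => f x y :: ladd f a b

/-- Lists as polynomials: multiplication. -/
def lmul {A : Type} (f g : A → A → A) (z : A) : List A → List A → List A
  | [], _ => []
  | x :: a, b => ladd f (b.map (g x)) (z :: lmul f g z a b)

/-- Lists as polynomials: evaluation. -/
def lev {A R : Type*} [CommRing R] (e : A → R) (v : R) : List A → R
  | [] => 0
  | x :: l => e x + v * lev e v l

theorem lev_add {A : Type} {R : Type*} [CommRing R] (e : A → R) (v : R) (f : A → A → A)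
    (hf : ∀ x y, e (f x y) = e x + e y) : ∀ a b, lev e v (ladd f a b) = lev e v a + lev e v b
  | [], b => by simp [ladd, lev]
  | x :: a, [] => by simp [ladd, lev]
  | x :: a, y :: b => by
    rw [ladd, lev, lev, lev, lev_add e v f hf a b, hf]; ring

theorem lev_map {A : Type} {R : Type*} [CommRing R] (e : A → R) (v : R) (g : A → A → A)
    (hg : ∀ x y, e (g x y) = e x * e y) (x : A) : ∀ b, lev e v (b.map (g x)) = e x * lev e v b
  | [] => by simp [lev]
  | y :: b => by
    rw [List.map_cons, lev, lev, lev_map e v g hg x b, hg]; ring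

theorem lev_mul {A : Type} {R : Type*} [CommRing R] (e : A → R) (v : R) (f g : A → A → A) (z : A)
    (hf : ∀ x y, e (f x y) = e x + e y) (hg : ∀ x y, e (g x y) = e x * e y) (hz : e z = 0) :
    ∀ a b, lev e v (lmul f g z a b) = lev e v a * lev e v b
  | [], b => by simp [lmul, lev]
  | x :: a, b => by
    rw [lmul, lev_add e v f hf, lev_map e v g hg, lev, lev, lev_mul e v f g z hf hg hz a b, hz]; ring

def add1 : List ℤ → List ℤ → List ℤ := ladd Int.add
def mul1 : List ℤ → List ℤ → List ℤ := lmul Int.add Int.mul 0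
def add2 : List (List ℤ) → List (List ℤ) → List (List ℤ) := ladd add1
def mul2 : List (List ℤ) → List (List ℤ) → List (List ℤ) := lmul add1 mul1 []
def add3 : List (List (List ℤ)) → List (List (List ℤ)) → List (List (List ℤ)) := ladd add2
def mul3 : List (List (List ℤ)) → List (List (List ℤ)) → List (List (List ℤ)) := lmul add2 mul2 []

def lev1 {R : Type*} [CommRing R] (n : R) : List ℤ → R := lev (fun z : ℤ => (z : R)) n
def lev2 {R : Type*} [CommRing R] (n t : R) : List (List ℤ) → R := lev (lev1 n) t
def lev3 {R : Type*} [CommRing R] (n s t : R) : List (List (List ℤ)) → R := lev (lev2 n t) s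

theorem lev1_add {R : Type*} [CommRing R] (n : R) (a b) : lev1 n (add1 a b) = lev1 n a + lev1 n b :=
  lev_add _ _ _ (fun x y => Int.cast_add x y) a b
theorem lev1_mul {R : Type*} [CommRing R] (n : R) (a b) : lev1 n (mul1 a b) = lev1 n a * lev1 n b :=
  lev_mul _ _ _ _ _ (fun x y => Int.cast_add x y) (fun x y => Int.cast_mul x y) Int.cast_zero a b
theorem lev2_add {R : Type*} [CommRing R] (n t : R) (a b) : lev2 n t (add2 a b) = lev2 n t a + lev2 n t b :=
  lev_add _ _ _ (lev1_add n) a b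
theorem lev2_mul {R : Type*} [CommRing R] (n t : R) (a b) : lev2 n t (mul2 a b) = lev2 n t a * lev2 n t b :=
  lev_mul _ _ _ _ _ (lev1_add n) (lev1_mul n) rfl a b
theorem lev3_add {R : Type*} [CommRing R] (n s t : R) (a b) : lev3 n s t (add3 a b) = lev3 n s t a + lev3 n s t b :=
  lev_add _ _ _ (lev2_add n t) a b
theorem lev3_mul {R : Type*} [CommRing R] (n s t : R) (a b) : lev3 n s t (mul3 a b) = lev3 n s t a * lev3 n s t b :=
  lev_mul _ _ _ _ _ (lev2_add n t) (lev2_mul n t) rfl a b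

def isz1 : List ℤ → Bool
  | [] => true
  | x :: l => (x == 0) && isz1 l
def isz2 : List (List ℤ) → Bool
  | [] => true
  | x :: l => isz1 x && isz2 l
def isz3 : List (List (List ℤ)) → Bool
  | [] => true
  | x :: l => isz2 x && isz3 l

theorem isz1_lev {R : Type*} [CommRing R] (n : R) : ∀ a, isz1 a = true → lev1 n a = 0
  | [], _ => rfl
  | x :: l, h => by
    rw [isz1, Bool.and_eq_true, beq_iff_eq] at h
    have := isz1_lev n l h.2
    rw [lev1] at this
    rw [lev1, lev, this, h.1]; simp
theorem isz2_lev {R : Type*} [CommRing R] (n t : R) : ∀ a, isz2 a = true → lev2 n t a = 0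
  | [], _ => rfl
  | x :: l, h => by
    rw [isz2, Bool.and_eq_true] at h
    have := isz2_lev n t l h.2
    rw [lev2] at this
    rw [lev2, lev, this, isz1_lev n x h.1]; simp
theorem isz3_lev {R : Type*} [CommRing R] (n s t : R) : ∀ a, isz3 a = true → lev3 n s t a = 0
  | [], _ => rfl
  | x :: l, h => by
    rw [isz3, Bool.and_eq_true] at h
    have := isz3_lev n s t l h.2
    rw [lev3] at this
    rw [lev3, lev, this, isz2_lev n t x h.1]; simp

/-- Polynomial expressions in `n`, `s`, `t`. -/
inductive PE where
  | hc (l : List ℤ) : PE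
  | vs : PE
  | vt : PE
  | add (a b : PE) : PE
  | mul (a b : PE) : PE

def PE.ev {R : Type*} [CommRing R] (n s t : R) : PE → R
  | .hc l => hv n l
  | .vs => s
  | .vt => t
  | .add a b => a.ev n s t + b.ev n s t
  | .mul a b => a.ev n s t * b.ev n s t

def PE.nf : PE → List (List (List ℤ))
  | .hc l => [[l]]
  | .vs => [[], [[1]]]
  | .vt => [[[], [1]]]
  | .add a b => add3 a.nf b.nf
  | .mul a b => mul3 a.nf b.nf

theorem lev1_hv {R : Type*} [CommRing R] (n : R) : ∀ l, lev1 n l = hv n l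
  | [] => rfl
  | c :: l => by
    have := lev1_hv n l
    rw [lev1] at this
    rw [lev1, lev, hv, this]

theorem PE.ev_nf {R : Type*} [CommRing R] (n s t : R) (a : PE) : a.ev n s t = lev3 n s t a.nf := by
  induction a with
  | hc l => simp [PE.ev, PE.nf, lev3, lev2, lev, lev1_hv]
  | vs => simp [PE.ev, PE.nf, lev3, lev2, lev1, lev]
  | vt => simp [PE.ev, PE.nf, lev3, lev2, lev1, lev]
  | add a b iha ihb => rw [PE.ev, PE.nf, lev3_add, iha, ihb]
  | mul a b iha ihb => rw [PE.ev, PE.nf, lev3_mul, iha, ihb]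

instance : Add PE := ⟨PE.add⟩
instance : Mul PE := ⟨PE.mul⟩
theorem PE.ev_add {R : Type*} [CommRing R] (n s t : R) (a b : PE) : (a + b).ev n s t = a.ev n s t + b.ev n s t := rfl
theorem PE.ev_mul {R : Type*} [CommRing R] (n s t : R) (a b : PE) : (a * b).ev n s t = a.ev n s t * b.ev n s t := rfl

def PE.pw (a : PE) : ℕ → PE
  | 0 => PE.hc [1]
  | k+1 => PE.pw a k * a
theorem PE.ev_pw {R : Type*} [CommRing R] (n s t : R) (a : PE) (k : ℕ) : (a.pw k).ev n s t = a.ev n s t ^ k := by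
  induction k with
  | zero => simp [PE.pw, PE.ev, hv]
  | succ k ih => rw [PE.pw, PE.ev_mul, ih, pow_succ]

def PE.sm (f : ℕ → PE) : ℕ → PE
  | 0 => PE.hc []
  | k+1 => PE.sm f k + f k
theorem PE.ev_sm {R : Type*} [CommRing R] (n s t : R) (f : ℕ → PE) (k : ℕ) :
    (PE.sm f k).ev n s t = ∑ i ∈ Finset.range k, (f i).ev n s t := by
  induction k with
  | zero => simp [PE.sm, PE.ev, hv]
  | succ k ih => rw [PE.sm, PE.ev_add, ih, Finset.sum_range_succ]

def PE.XX (a b : PE) : PE :=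
  PE.sm (fun i => a.pw i * PE.sm (fun j => PE.hc (cf i j) * b.pw j) 6) 5

theorem PE.ev_XX {R : Type*} [CommRing R] (n s t : R) (a b : PE) :
    (PE.XX a b).ev n s t = _root_.XX n (a.ev n s t) (b.ev n s t) := by
  rw [PE.XX, _root_.XX, PE.ev_sm]
  refine Finset.sum_congr rfl fun i _ => ?_
  rw [PE.ev_mul, PE.ev_sm, PE.ev_pw, Finset.mul_sum]
  refine Finset.sum_congr rfl fun j _ => ?_
  rw [PE.ev_mul, PE.ev_pw, PE.ev]; ring

/-- Linear form with constant list `l` added. -/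
def sL (l : List ℤ) : PE := PE.vs + PE.hc l
def tL (l : List ℤ) : PE := PE.vt + PE.hc l
def stL (l : List ℤ) : PE := PE.vs + (PE.vt + PE.hc l)

def certPE : PE :=
  sL [-1,1] * (tL [-1,1] * (stL [-1,1] * (sL [0,1] * (tL [0,1] * (stL [0,1] * (sL [1,1] * (tL
    [1,1] * (stL [1,1] * PE.hc [22968, 23664, -295800, -425792, 1361264, 2905088, -1717968, -8717792, -6521672, 2703504, 6491720, 3511328, 659488])))))))) +
  sL [-1,1] * (tL [-1,1] * (stL [-1,1] * (sL [0,1] * (tL [0,1] * (stL [0,1] * (sL [-1,-1] * (sL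
    [-1,-1] * (tL [-1,-1] * (tL [-1,-1] * PE.hc [-482328, -2173608, 4162776, 32497632, 6810472, -186631368, -205029672, 444328576, 906785792, 102395664, -712247040, -390416896]))))))))) +
  sL [-1,1] * (tL [-1,1] * (stL [-1,1] * (sL [-1,-1] * (sL [-1,-1] * (tL [-1,-1] * (tL [-1,-1] *
    (sL [0,-1] * (sL [0,-1] * (tL [0,-1] * (tL [0,-1] * PE.hc [-356328, 1365728, 1282496, -10829136, 4250872, 33040592, -30331552, -44520384, 56150448, 20943200, -30995936])))))))))) +
  sL [-1,-1] * (sL [-1,-1] * (tL [-1,-1] * (tL [-1,-1] * (sL [0,-1] * (sL [0,-1] * (tL [0,-1] *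
    (tL [0,-1] * (sL [1,-1] * (sL [1,-1] * (tL [1,-1] * (tL [1,-1] * PE.hc [-39592, -28616, 249196, 103328, -646452, -47808, 795556, -191776, -358708, 164872]))))))))))) +
  PE.hc [-1] * (sL [-1,1] * (sL [-1,-1] * (sL [-1,-1] * (stL [-1,1] * PE.XX (sL [1]) PE.vt)))) +
  PE.vs * (PE.vs * (PE.vs * (stL [] * PE.XX PE.vs PE.vt))) +
  PE.hc [-1] * (tL [-1,1] * (tL [-1,-1] * (tL [-1,-1] * (stL [-1,1] * PE.XX (tL [1]) PE.vs)))) +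
  PE.vt * (PE.vt * (PE.vt * (stL [] * PE.XX PE.vt PE.vs)))

theorem cert_zero : isz3 certPE.nf = true := by decide +kernel

theorem cert_identity {R : Type*} [CommRing R] (n s t : R) :
    4*(n^2-1) * (2*(2*n+1)*(n+1)^6*c0 n * ((s+n-1)*(s+n)*(s+n+1)*((t+n-1)*(t+n)*(t+n+1))
        *((s+t+n-1)*(s+t+n)*(s+t+n+1)))
     - c1 n * ((s+n-1)*(s+n)*((t+n-1)*(t+n))*((s+t+n-1)*(s+t+n))*((s-n-1)^2*(t-n-1)^2))
     - 2 * c2 n * ((s+n-1)*(t+n-1)*(s+t+n-1)*((s-n-1)^2*(t-n-1)^2*((s-n)^2*(t-n)^2)))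
     + (n-1)^4*c0 (n+1) * ((s-n-1)^2*(t-n-1)^2*((s-n)^2*(t-n)^2)*((s-n+1)^2*(t-n+1)^2)))
    = ((s+n-1)*(s-n-1)^2*(s+t+n-1)*XX n (s+1) t - s^3*(s+t)*XX n s t)
    + ((t+n-1)*(t-n-1)^2*(s+t+n-1)*XX n (t+1) s - t^3*(s+t)*XX n t s) := by
  have h : certPE.ev n s t = 0 := by rw [PE.ev_nf]; exact isz3_lev n s t _ cert_zero
  have h0 : hv n [22968, 23664, -295800, -425792, 1361264, 2905088, -1717968, -8717792, -6521672, 2703504, 6491720, 3511328, 659488] = 4*(n^2-1) * (2*(2*n+1)*(n+1)^6*c0 n) := by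
    simp only [hv, c0]; push_cast; ring
  have h1 : hv n [-482328, -2173608, 4162776, 32497632, 6810472, -186631368, -205029672, 444328576, 906785792, 102395664, -712247040, -390416896] = -(4*(n^2-1) * c1 n) := by simp only [hv, c1]; push_cast; ring
  have h2 : hv n [-356328, 1365728, 1282496, -10829136, 4250872, 33040592, -30331552, -44520384, 56150448, 20943200, -30995936] = -(4*(n^2-1) * (2 * c2 n)) := by simp only [hv, c2]; push_cast; ring
  have h3 : hv n [-39592, -28616, 249196, 103328, -646452, -47808, 795556, -191776, -358708, 164872] = 4*(n^2-1) * ((n-1)^4*c0 (n+1)) := by simp only [hv, c0]; push_cast; ring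
  have l1 : hv n [-1,1] = n - 1 := by simp only [hv]; push_cast; ring
  have l2 : hv n [0,1] = n := by simp only [hv]; push_cast; ring
  have l3 : hv n [1,1] = n + 1 := by simp only [hv]; push_cast; ring
  have l4 : hv n [-1,-1] = -n - 1 := by simp only [hv]; push_cast; ring
  have l5 : hv n [0,-1] = -n := by simp only [hv]; push_cast; ring
  have l6 : hv n [1,-1] = -n + 1 := by simp only [hv]; push_cast; ring
  have l7 : hv n [-1] = -1 := by simp only [hv]; push_cast; ring
  have l8 : hv n [1] = 1 := by simp only [hv]; push_cast; ring
  have l9 : hv n [] = 0 := rfl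
  have a1 : (sL [-1,1]).ev n s t = s+n-1 := by rw [sL, PE.ev_add, PE.ev, PE.ev, l1]; ring
  have a2 : (sL [0,1]).ev n s t = s+n := by rw [sL, PE.ev_add, PE.ev, PE.ev, l2]
  have a3 : (sL [1,1]).ev n s t = s+n+1 := by rw [sL, PE.ev_add, PE.ev, PE.ev, l3]; ring
  have a4 : (sL [-1,-1]).ev n s t = s-n-1 := by rw [sL, PE.ev_add, PE.ev, PE.ev, l4]; ring
  have a5 : (sL [0,-1]).ev n s t = s-n := by rw [sL, PE.ev_add, PE.ev, PE.ev, l5]; ring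
  have a6 : (sL [1,-1]).ev n s t = s-n+1 := by rw [sL, PE.ev_add, PE.ev, PE.ev, l6]; ring
  have a7 : (sL [1]).ev n s t = s+1 := by rw [sL, PE.ev_add, PE.ev, PE.ev, l8]
  have b1 : (tL [-1,1]).ev n s t = t+n-1 := by rw [tL, PE.ev_add, PE.ev, PE.ev, l1]; ring
  have b2 : (tL [0,1]).ev n s t = t+n := by rw [tL, PE.ev_add, PE.ev, PE.ev, l2]
  have b3 : (tL [1,1]).ev n s t = t+n+1 := by rw [tL, PE.ev_add, PE.ev, PE.ev, l3]; ring
  have b4 : (tL [-1,-1]).ev n s t = t-n-1 := by rw [tL, PE.ev_add, PE.ev, PE.ev, l4]; ring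
  have b5 : (tL [0,-1]).ev n s t = t-n := by rw [tL, PE.ev_add, PE.ev, PE.ev, l5]; ring
  have b6 : (tL [1,-1]).ev n s t = t-n+1 := by rw [tL, PE.ev_add, PE.ev, PE.ev, l6]; ring
  have b7 : (tL [1]).ev n s t = t+1 := by rw [tL, PE.ev_add, PE.ev, PE.ev, l8]
  have d1 : (stL [-1,1]).ev n s t = s+t+n-1 := by
    rw [stL, PE.ev_add, PE.ev_add, PE.ev, PE.ev, PE.ev, l1]; ring
  have d2 : (stL [0,1]).ev n s t = s+t+n := by
    rw [stL, PE.ev_add, PE.ev_add, PE.ev, PE.ev, PE.ev, l2]; ring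
  have d3 : (stL [1,1]).ev n s t = s+t+n+1 := by
    rw [stL, PE.ev_add, PE.ev_add, PE.ev, PE.ev, PE.ev, l3]; ring
  have d4 : (stL []).ev n s t = s+t := by
    rw [stL, PE.ev_add, PE.ev_add, PE.ev, PE.ev, PE.ev, l9]; ring
  rw [certPE] at h
  simp only [PE.ev_add, PE.ev_mul, PE.ev_pw, PE.ev_XX, a1, a2, a3, a4, a5, a6, a7, b1, b2, b3, b4,
    b5, b6, b7, d1, d2, d3, d4] at h
  simp only [PE.ev, h0, h1, h2, h3, l7] at h
  generalize XX n (s+1) t = X1 at h ⊢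
  generalize XX n s t = X2 at h ⊢
  generalize XX n (t+1) s = X3 at h ⊢
  generalize XX n t s = X4 at h ⊢
  generalize c0 (n+1) = C3 at h ⊢
  generalize s+t+n+1 = D3 at h ⊢
  generalize s+t+n-1 = D1 at h ⊢
  generalize s+t+n = D2 at h ⊢
  generalize s+t = D4 at h ⊢
  generalize s+n+1 = A3 at h ⊢
  generalize s+n-1 = A1 at h ⊢
  generalize s+n = A2 at h ⊢
  generalize s-n-1 = A4 at h ⊢
  generalize s-n+1 = A6 at h ⊢
  generalize s-n = A5 at h ⊢
  generalize t+n+1 = B3 at h ⊢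
  generalize t+n-1 = B1 at h ⊢
  generalize t+n = B2 at h ⊢
  generalize t-n-1 = B4 at h ⊢
  generalize t-n+1 = B6 at h ⊢
  generalize t-n = B5 at h ⊢
  linear_combination h

/-- Residue functional with the weights `ww`. -/
def SS (m : ℕ) (N : Polynomial ℚ) : ℚ :=
  ∑ k ∈ Finset.range (m+1), (N.eval₂ (TrivSqZeroExt.inlHom ℚ ℚ) (Sx k) * ww m k).snd

theorem SS_add (m : ℕ) (N M : Polynomial ℚ) : SS m (N + M) = SS m N + SS m M := by
  simp only [SS, ← Finset.sum_add_distrib, Polynomial.eval₂_add, add_mul, TrivSqZeroExt.snd_add]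

theorem SS_C (m : ℕ) (c : ℚ) (N : Polynomial ℚ) :
    SS m (Polynomial.C c * N) = c * SS m N := by
  simp only [SS, Finset.mul_sum, Polynomial.eval₂_mul, Polynomial.eval₂_C, mul_assoc]
  refine Finset.sum_congr rfl fun k _ => ?_
  rw [TrivSqZeroExt.snd_mul]
  simp

theorem SS_one (m : ℕ) : SS m 1 = 0 := by
  have h : SS m 1 = - SS m 1 := by
    unfold SS
    conv_lhs => rw [← Finset.sum_range_reflect]
    rw [← Finset.sum_neg_distrib]
    refine Finset.sum_congr rfl fun k hk => ?_
    have hk' : k ≤ m := by simpa [Nat.lt_succ_iff] using hk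
    have e1 : m + 1 - 1 - k = m - k := by omega
    have e2 : m - (m - k) = k := by omega
    simp only [Polynomial.eval₂_one, one_mul, snd_ww, e1, e2, Nat.choose_symm hk']
    ring
  linarith

/-- shift relation -/
theorem SS_shift (m : ℕ) (N : Polynomial ℚ) :
    SS m (Polynomial.X^2 * N.comp (Polynomial.X - 1)) =
      SS m ((Polynomial.X - Polynomial.C (m:ℚ))^2 * N) := by
  unfold SS
  have hC : (TrivSqZeroExt.inlHom ℚ ℚ) (m:ℚ) = (m : DN) := by simp
  have L : ∀ k, (Polynomial.eval₂ (TrivSqZeroExt.inlHom ℚ ℚ) (Sx k)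
      (Polynomial.X^2 * N.comp (Polynomial.X - 1)) * ww m k) =
      N.eval₂ (TrivSqZeroExt.inlHom ℚ ℚ) (Sx k - 1) * (ww m k * Sx k ^ 2) := by
    intro k
    simp only [Polynomial.eval₂_mul, Polynomial.eval₂_pow, Polynomial.eval₂_X,
      Polynomial.eval₂_comp, Polynomial.eval₂_sub, Polynomial.eval₂_one]
    ring
  have R : ∀ k, (Polynomial.eval₂ (TrivSqZeroExt.inlHom ℚ ℚ) (Sx k)
      ((Polynomial.X - Polynomial.C (m:ℚ))^2 * N) * ww m k) =
      N.eval₂ (TrivSqZeroExt.inlHom ℚ ℚ) (Sx k) * (ww m k * (Sx k - (m:DN)) ^ 2) := by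
    intro k
    simp only [Polynomial.eval₂_mul, Polynomial.eval₂_pow, Polynomial.eval₂_X,
       Polynomial.eval₂_sub, Polynomial.eval₂_C, hC]
    ring
  simp only [L, R]
  rw [Finset.sum_range_succ', Finset.sum_range_succ]
  have z0 : Sx 0 ^ 2 = 0 := by simp [Sx, pow_two, ee_sq]
  have zm : (Sx m - (m:DN))^2 = 0 := by simp [Sx, pow_two, ee_sq]
  rw [z0, zm]
  simp only [mul_zero, TrivSqZeroExt.snd_zero, add_zero]
  refine Finset.sum_congr rfl fun k _ => ?_
  rw [ww_rel2]
  congr 3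
  simp [Sx]; ring

theorem SS_fp (m d : ℕ) (hd : d ≤ 2*m) : SS m (descPochhammer ℚ d) = 0 := by
  induction d with
  | zero => simpa using SS_one m
  | succ d ih =>
    have ih := ih (by omega)
    have h := SS_shift m (descPochhammer ℚ d)
    have e1 : descPochhammer ℚ (d+1) = Polynomial.X * (descPochhammer ℚ d).comp (Polynomial.X - 1) :=
      descPochhammer_succ_left ℚ d
    have e2 : descPochhammer ℚ (d+1) = descPochhammer ℚ d * (Polynomial.X - (d : Polynomial ℚ)) :=
      descPochhammer_succ_right ℚ d
    have key : Polynomial.X^2 * (descPochhammer ℚ d).comp (Polynomial.X - 1) =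
      (Polynomial.X - Polynomial.C (m:ℚ))^2 * descPochhammer ℚ d +
      (Polynomial.C (2*m-d:ℚ) * descPochhammer ℚ (d+1) +
        Polynomial.C (-((d:ℚ)-m)^2) * descPochhammer ℚ d) := by
      have : Polynomial.X^2 * (descPochhammer ℚ d).comp (Polynomial.X - 1) =
        Polynomial.X * (descPochhammer ℚ d * (Polynomial.X - (d : Polynomial ℚ))) := by
        rw [← e2, e1]; ring
      rw [this, e2]
      simp only [map_sub, map_mul, map_neg, map_pow, map_natCast, map_ofNat]
      ring
    rw [key, SS_add, SS_add, SS_C, SS_C, ih] at h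
    have h2 : (2*m-d:ℚ) ≠ 0 := by
      have : (d:ℚ)+1 ≤ 2*m := by exact_mod_cast hd
      intro h; linarith
    have h3 : (2*m-d:ℚ) * SS m (descPochhammer ℚ (d+1)) = 0 := by linarith
    exact (mul_eq_zero.mp h3).resolve_left h2

theorem SS_deg (m : ℕ) (d : ℕ) (hd : d ≤ 2*m) : ∀ N : Polynomial ℚ, N.natDegree ≤ d → SS m N = 0 := by
  induction d with
  | zero =>
    intro N hN
    rw [Polynomial.eq_C_of_natDegree_le_zero hN, ← mul_one (Polynomial.C _), SS_C, SS_one, mul_zero]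
  | succ d ih =>
    intro N hN
    have hm := monic_descPochhammer ℚ (d+1)
    have hdeg : (descPochhammer ℚ (d+1)).natDegree = d+1 := descPochhammer_natDegree ℚ (d+1)
    set c := N.coeff (d+1)
    have e : N = Polynomial.C c * descPochhammer ℚ (d+1) + (N - Polynomial.C c * descPochhammer ℚ (d+1)) := by ring
    rw [e, SS_add, SS_C, SS_fp m (d+1) hd, mul_zero, zero_add]
    apply ih (by omega)
    have h1 : (N - Polynomial.C c * descPochhammer ℚ (d+1)).natDegree ≤ d+1 := by
      refine (Polynomial.natDegree_sub_le _ _).trans (max_le hN ?_)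
      exact (Polynomial.natDegree_C_mul_le _ _).trans hdeg.le
    have h2 : (N - Polynomial.C c * descPochhammer ℚ (d+1)).coeff (d+1) = 0 := by
      rw [Polynomial.coeff_sub, Polynomial.coeff_C_mul]
      have : (descPochhammer ℚ (d+1)).coeff (d+1) = 1 := by
        have := hm.coeff_natDegree; rwa [hdeg] at this
      rw [this]; simp [c]
    rw [Polynomial.natDegree_le_iff_coeff_eq_zero]
    intro j hj
    rcases Nat.lt_or_ge (d+1) j with hj' | hj'
    · exact Polynomial.coeff_eq_zero_of_natDegree_lt (h1.trans_lt hj')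
    · have : j = d+1 := by omega
      rw [this, h2]

theorem SS_pow (m d : ℕ) (hd : d ≤ 2*m) :
    ∑ k ∈ Finset.range (m+1), (Sx k ^ d * ww m k).snd = 0 := by
  have := SS_deg m d hd (Polynomial.X^d) (Polynomial.natDegree_X_pow_le d)
  simpa [SS] using this

/-- Vanishing of the sum of residues in one variable. -/
theorem res_sum (m : ℕ) (i j : DN →+* KK) (hij : ∀ a b, TT (i a * j b) = a.snd * b.snd)
    (N : Polynomial DN) (hN : N.natDegree ≤ 2*m) :
    ∑ k ∈ Finset.range (m+1), TT (N.eval₂ j (i (Sx k)) * i (ww m k)) = 0 := by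
  have : ∀ k, TT (N.eval₂ j (i (Sx k)) * i (ww m k)) =
      ∑ d ∈ Finset.range (2*m+1), (N.coeff d).snd * (Sx k ^ d * ww m k).snd := by
    intro k
    rw [Polynomial.eval₂_eq_sum_range' j (Nat.lt_succ_of_le hN), Finset.sum_mul, map_sum]
    refine Finset.sum_congr rfl fun d _ => ?_
    rw [mul_comm (_ : ℚ), ← hij, map_mul i, map_pow i]
    congr 1; ring
  simp only [this]
  rw [Finset.sum_comm]
  refine Finset.sum_eq_zero fun d hd => ?_
  rw [← Finset.mul_sum, SS_pow m d (by simpa [Nat.lt_succ_iff] using hd), mul_zero]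

theorem res_sum_x (m : ℕ) (N : Polynomial DN) (hN : N.natDegree ≤ 2*m) :
    ∑ k ∈ Finset.range (m+1), TT (N.eval₂ iy (ix (Sx k)) * ix (ww m k)) = 0 :=
  res_sum m ix iy TT_ix_iy N hN

theorem res_sum_y (m : ℕ) (N : Polynomial DN) (hN : N.natDegree ≤ 2*m) :
    ∑ k ∈ Finset.range (m+1), TT (N.eval₂ ix (iy (Sx k)) * iy (ww m k)) = 0 :=
  res_sum m iy ix (fun a b => by rw [mul_comm (iy a), TT_ix_iy, mul_comm]) N hN

theorem map_hv {R S : Type*} [CommRing R] [CommRing S] (f : R →+* S) (n : R) (l : List ℤ) :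
    f (hv n l) = hv (f n) l := by
  induction l with
  | nil => simp [hv]
  | cons c l ih => simp [hv, ih]

/-- Rising product `(z+1)(z+2)⋯(z+n)`. -/
def poch {R : Type*} [CommRing R] (z : R) (n : ℕ) : R := ∏ j ∈ Finset.range n, (z + ((j : R) + 1))

theorem poch_succ {R : Type*} [CommRing R] (z : R) (n : ℕ) :
    poch z (n+1) = poch z n * (z + ((n : R) + 1)) := Finset.prod_range_succ _ _

theorem poch_shift {R : Type*} [CommRing R] (z : R) (n : ℕ) :
    poch (z+1) n * (z+1) = poch z n * (z + ((n : R) + 1)) := by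
  rw [← poch_succ]
  unfold poch
  rw [Finset.prod_range_succ']
  congr 1
  · refine Finset.prod_congr rfl fun j _ => ?_
    push_cast; ring
  · simp

theorem map_poch {R S : Type*} [CommRing R] [CommRing S] (f : R →+* S) (z : R) (n : ℕ) :
    f (poch z n) = poch (f z) n := by
  simp [poch]

def trm (n k l : ℕ) : KK :=
  kap (n.factorial : ℚ) * ix (poch (Sx k) n * ww n k) * iy (poch (Sx l) n * ww n l)
    * poch (ix (Sx k) + iy (Sx l)) n

def Lam (n : ℕ) (F : ℕ → ℕ → KK) : ℚ :=
  ∑ k ∈ Finset.range (n+1), ∑ l ∈ Finset.range (n+1), TT (trm n k l * F k l)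

theorem Lam_ext (n M : ℕ) (h : n + 1 ≤ M) (F : ℕ → ℕ → KK) :
    Lam n F = ∑ k ∈ Finset.range M, ∑ l ∈ Finset.range M, TT (trm n k l * F k l) := by
  unfold Lam
  have hs : Finset.range (n+1) ⊆ Finset.range M := Finset.range_mono h
  rw [← Finset.sum_subset hs]
  · refine Finset.sum_congr rfl fun k _ => ?_
    refine Finset.sum_subset hs fun l _ hl => ?_
    have : n < l := by simpa using hl
    simp [trm, ww_zero this]
  · intro k _ hk
    have : n < k := by simpa using hk
    simp [trm, ww_zero this]

def base (r k l : ℕ) : KK :=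
  kap (r.factorial : ℚ) * ix (poch (Sx k) r * ww (r+3) k) * iy (poch (Sx l) r * ww (r+3) l)
    * poch (ix (Sx k) + iy (Sx l)) r

theorem ww_a (r k : ℕ) (i : DN →+* KK) :
    i (ww (r+2) k) = i (ww (r+3) k) * (i (Sx k) - ((r:KK)+3))^2 := by
  rw [← ww_rel1 (r+2) k, map_mul, map_pow, map_sub]
  simp only [map_add, map_natCast, map_one]
  push_cast; ring

theorem ww_b (r k : ℕ) (i : DN →+* KK) :
    i (ww (r+1) k) = i (ww (r+3) k) * (i (Sx k) - ((r:KK)+3))^2 * (i (Sx k) - ((r:KK)+2))^2 := by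
  rw [← ww_a, ← ww_rel1 (r+1) k, map_mul, map_pow, map_sub]
  simp only [map_add, map_natCast, map_one]
  push_cast; ring

theorem ww_c (r k : ℕ) (i : DN →+* KK) :
    i (ww r k) = i (ww (r+3) k) * (i (Sx k) - ((r:KK)+3))^2 * (i (Sx k) - ((r:KK)+2))^2
      * (i (Sx k) - ((r:KK)+1))^2 := by
  rw [← ww_b, ← ww_rel1 r k, map_mul, map_pow, map_sub]
  simp only [map_add, map_natCast, map_one]

theorem kap_fact (r : ℕ) : kap ((r+1).factorial : ℚ) = kap (r.factorial : ℚ) * ((r : KK)+1) := by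
  rw [Nat.factorial_succ]; push_cast
  rw [map_mul, map_add, map_natCast, map_one]; ring

theorem map_poch' (i : DN →+* KK) (z : DN) (n : ℕ) : i (poch z n) = poch (i z) n := by
  induction n with
  | zero => simp [poch]
  | succ n ih => rw [poch_succ, poch_succ, map_mul, ih, map_add, map_add, map_natCast, map_one]

theorem trm_eq (n k l : ℕ) : trm n k l = kap (n.factorial : ℚ) * (poch (ix (Sx k)) n * ix (ww n k)) *
    (poch (iy (Sx l)) n * iy (ww n l)) * poch (ix (Sx k) + iy (Sx l)) n := by
  rw [trm, ix.map_mul, iy.map_mul, map_poch', map_poch']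

theorem base_eq (r k l : ℕ) : base r k l = kap (r.factorial : ℚ) * (poch (ix (Sx k)) r * ix (ww (r+3) k)) *
    (poch (iy (Sx l)) r * iy (ww (r+3) l)) * poch (ix (Sx k) + iy (Sx l)) r := by
  rw [base, ix.map_mul, iy.map_mul, map_poch', map_poch']

theorem poch1 {R : Type*} [CommRing R] (z : R) (r : ℕ) : poch z (r+1) = poch z r * (z + ((r:R)+1)) :=
  poch_succ z r
theorem poch2 {R : Type*} [CommRing R] (z : R) (r : ℕ) :
    poch z (r+2) = poch z r * (z + ((r:R)+1)) * (z + ((r:R)+2)) := by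
  rw [poch_succ z (r+1), poch1]; push_cast; ring
theorem poch3 {R : Type*} [CommRing R] (z : R) (r : ℕ) :
    poch z (r+3) = poch z r * (z + ((r:R)+1)) * (z + ((r:R)+2)) * (z + ((r:R)+3)) := by
  rw [poch_succ z (r+2), poch2]; push_cast; ring
theorem kap_fact2 (r : ℕ) : kap ((r+2).factorial : ℚ) = kap (r.factorial : ℚ) * ((r : KK)+1) * ((r:KK)+2) := by
  rw [kap_fact (r+1), kap_fact r]; push_cast; ring
theorem kap_fact3 (r : ℕ) : kap ((r+3).factorial : ℚ) =
    kap (r.factorial : ℚ) * ((r : KK)+1) * ((r:KK)+2) * ((r:KK)+3) := by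
  rw [kap_fact (r+2), kap_fact2 r]; push_cast; ring

theorem trm3 (r k l : ℕ) (n s t : KK) (hn : n = (r:KK)+2) (hs : s = ix (Sx k)) (ht : t = iy (Sx l)) :
    trm (r+3) k l = base r k l * ((n+1)*n*(n-1) * ((s+n-1)*(s+n)*(s+n+1)*((t+n-1)*(t+n)*(t+n+1))
        *((s+t+n-1)*(s+t+n)*(s+t+n+1)))) := by
  have hr : (r:KK) = n - 2 := by rw [hn]; ring
  rw [trm_eq, base_eq, kap_fact3, poch3, poch3, poch3, hr, ← hs, ← ht]
  have f1 : n - 2 + 1 = n - 1 := by ring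
  have f2 : n - 2 + 2 = n := by ring
  have f3 : n - 2 + 3 = n + 1 := by ring
  simp only [f1, f2, f3, ← add_sub_assoc, ← add_assoc, ← sub_sub, sub_add]
  generalize s + n - 1 = s1
  generalize s + n + 1 = s3
  generalize s + n = s2
  generalize t + n - 1 = t1
  generalize t + n + 1 = t3
  generalize t + n = t2
  generalize s + t + n - 1 = u1
  generalize s + t + n + 1 = u3
  generalize s + t + n = u2
  generalize s - n - 1 = v1
  generalize s - (n - 1) = v3
  generalize s - n = v2
  generalize t - n - 1 = v4
  generalize t - (n - 1) = v5
  generalize t - n = v6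
  generalize n - 1 = n1
  generalize n + 1 = n2
  generalize kap (r.factorial : ℚ) = K
  generalize poch s r = P1
  generalize poch t r = P2
  generalize poch (s+t) r = P3
  generalize ix (ww (r+3) k) = W1
  generalize iy (ww (r+3) l) = W2
  ring

theorem trm2 (r k l : ℕ) (n s t : KK) (hn : n = (r:KK)+2) (hs : s = ix (Sx k)) (ht : t = iy (Sx l)) :
    trm (r+2) k l = base r k l * (n*(n-1) *
      ((s+n-1)*(s+n)*((t+n-1)*(t+n))*((s+t+n-1)*(s+t+n))*((s-n-1)^2*(t-n-1)^2))) := by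
  have hr : (r:KK) = n - 2 := by rw [hn]; ring
  rw [trm_eq, base_eq, kap_fact2, poch2, poch2, poch2, ww_a r k ix, ww_a r l iy, hr, ← hs, ← ht]
  have f1 : n - 2 + 1 = n - 1 := by ring
  have f2 : n - 2 + 2 = n := by ring
  have f3 : n - 2 + 3 = n + 1 := by ring
  simp only [f1, f2, f3, ← add_sub_assoc, ← add_assoc, ← sub_sub, sub_add]
  generalize s + n - 1 = s1
  generalize s + n + 1 = s3
  generalize s + n = s2
  generalize t + n - 1 = t1
  generalize t + n + 1 = t3
  generalize t + n = t2
  generalize s + t + n - 1 = u1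
  generalize s + t + n + 1 = u3
  generalize s + t + n = u2
  generalize s - n - 1 = v1
  generalize s - (n - 1) = v3
  generalize s - n = v2
  generalize t - n - 1 = v4
  generalize t - (n - 1) = v5
  generalize t - n = v6
  generalize n - 1 = n1
  generalize n + 1 = n2
  generalize kap (r.factorial : ℚ) = K
  generalize poch s r = P1
  generalize poch t r = P2
  generalize poch (s+t) r = P3
  generalize ix (ww (r+3) k) = W1
  generalize iy (ww (r+3) l) = W2
  ring

theorem trm1 (r k l : ℕ) (n s t : KK) (hn : n = (r:KK)+2) (hs : s = ix (Sx k)) (ht : t = iy (Sx l)) :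
    trm (r+1) k l = base r k l * ((n-1) *
      ((s+n-1)*(t+n-1)*(s+t+n-1)*((s-n-1)^2*(t-n-1)^2*((s-n)^2*(t-n)^2)))) := by
  have hr : (r:KK) = n - 2 := by rw [hn]; ring
  rw [trm_eq, base_eq, kap_fact, poch1, poch1, poch1, ww_b r k ix, ww_b r l iy, hr, ← hs, ← ht]
  have f1 : n - 2 + 1 = n - 1 := by ring
  have f2 : n - 2 + 2 = n := by ring
  have f3 : n - 2 + 3 = n + 1 := by ring
  simp only [f1, f2, f3, ← add_sub_assoc, ← add_assoc, ← sub_sub, sub_add]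
  generalize s + n - 1 = s1
  generalize s + n + 1 = s3
  generalize s + n = s2
  generalize t + n - 1 = t1
  generalize t + n + 1 = t3
  generalize t + n = t2
  generalize s + t + n - 1 = u1
  generalize s + t + n + 1 = u3
  generalize s + t + n = u2
  generalize s - n - 1 = v1
  generalize s - (n - 1) = v3
  generalize s - n = v2
  generalize t - n - 1 = v4
  generalize t - (n - 1) = v5
  generalize t - n = v6
  generalize n - 1 = n1
  generalize n + 1 = n2
  generalize kap (r.factorial : ℚ) = K
  generalize poch s r = P1
  generalize poch t r = P2
  generalize poch (s+t) r = P3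
  generalize ix (ww (r+3) k) = W1
  generalize iy (ww (r+3) l) = W2
  ring

theorem trm0 (r k l : ℕ) (n s t : KK) (hn : n = (r:KK)+2) (hs : s = ix (Sx k)) (ht : t = iy (Sx l)) :
    trm (r) k l = base r k l * ((s-n-1)^2*(t-n-1)^2*((s-n)^2*(t-n)^2)*((s-n+1)^2*(t-n+1)^2)) := by
  have hr : (r:KK) = n - 2 := by rw [hn]; ring
  rw [trm_eq, base_eq, ww_c r k ix, ww_c r l iy, hr, ← hs, ← ht]
  have f1 : n - 2 + 1 = n - 1 := by ring
  have f2 : n - 2 + 2 = n := by ring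
  have f3 : n - 2 + 3 = n + 1 := by ring
  simp only [f1, f2, f3, ← add_sub_assoc, ← add_assoc, ← sub_sub, sub_add]
  generalize s + n - 1 = s1
  generalize s + n + 1 = s3
  generalize s + n = s2
  generalize t + n - 1 = t1
  generalize t + n + 1 = t3
  generalize t + n = t2
  generalize s + t + n - 1 = u1
  generalize s + t + n + 1 = u3
  generalize s + t + n = u2
  generalize s - n - 1 = v1
  generalize s - (n - 1) = v3
  generalize s - n = v2
  generalize t - n - 1 = v4
  generalize t - (n - 1) = v5
  generalize t - n = v6
  generalize n - 1 = n1
  generalize n + 1 = n2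
  generalize kap (r.factorial : ℚ) = K
  generalize poch s r = P1
  generalize poch t r = P2
  generalize poch (s+t) r = P3
  generalize ix (ww (r+3) k) = W1
  generalize iy (ww (r+3) l) = W2
  ring

def Gh (r k l : ℕ) : KK := base r k l * (ix (Sx k)^2 * XX ((r:KK)+2) (ix (Sx k)) (iy (Sx l)))
def Gh' (r k l : ℕ) : KK := base r k l * (iy (Sx l)^2 * XX ((r:KK)+2) (iy (Sx l)) (ix (Sx k)))

theorem Sx_succ (k : ℕ) : Sx (k+1) = Sx k + 1 := by simp [Sx]; ring

theorem base_x (r k l : ℕ) (n s t : KK) (hn : n = (r:KK)+2) (hs : s = ix (Sx k)) (ht : t = iy (Sx l)) :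
    base r (k+1) l * (s+1)^3 * (s+t+1) = base r k l * ((s+n-1)*(s-n-1)^2*(s+t+n-1)) := by
  have h1 := congrArg ix (ww_rel2 (r+3) k)
  have h2 := poch_shift (ix (Sx k)) r
  have h3 := poch_shift (ix (Sx k) + iy (Sx l)) r
  rw [Sx_succ] at h1
  simp only [map_mul, map_pow, map_sub, map_add, map_one, map_natCast] at h1
  subst hn hs ht
  rw [base_eq, base_eq, Sx_succ, map_add, map_one]
  rw [show ix (Sx k) + 1 + iy (Sx l) = ix (Sx k) + iy (Sx l) + 1 by ring]
  push_cast at h1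
  calc _ = kap (r.factorial : ℚ) * (poch (ix (Sx k) + 1) r * (ix (Sx k) + 1)) *
        (ix (ww (r+3) (k+1)) * (ix (Sx k) + 1)^2) * (poch (iy (Sx l)) r * iy (ww (r+3) l)) *
        (poch (ix (Sx k) + iy (Sx l) + 1) r * (ix (Sx k) + iy (Sx l) + 1)) := by ring
    _ = _ := by rw [h1, h2, h3]; ring

theorem base_y (r k l : ℕ) (n s t : KK) (hn : n = (r:KK)+2) (hs : s = ix (Sx k)) (ht : t = iy (Sx l)) :
    base r k (l+1) * (t+1)^3 * (s+t+1) = base r k l * ((t+n-1)*(t-n-1)^2*(s+t+n-1)) := by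
  have h1 := congrArg iy (ww_rel2 (r+3) l)
  have h2 := poch_shift (iy (Sx l)) r
  have h3 := poch_shift (ix (Sx k) + iy (Sx l)) r
  rw [Sx_succ] at h1
  simp only [map_mul, map_pow, map_sub, map_add, map_one, map_natCast] at h1
  subst hn hs ht
  rw [base_eq, base_eq, Sx_succ, map_add, map_one]
  rw [show ix (Sx k) + (iy (Sx l) + 1) = ix (Sx k) + iy (Sx l) + 1 by ring]
  push_cast at h1
  calc _ = kap (r.factorial : ℚ) * (poch (iy (Sx l) + 1) r * (iy (Sx l) + 1)) *
        (iy (ww (r+3) (l+1)) * (iy (Sx l) + 1)^2) * (poch (ix (Sx k)) r * ix (ww (r+3) k)) *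
        (poch (ix (Sx k) + iy (Sx l) + 1) r * (ix (Sx k) + iy (Sx l) + 1)) := by ring
    _ = _ := by rw [h1, h2, h3]; ring

def GG (r k l : ℕ) : KK := Gh r k l * (ix (Sx k) * (ix (Sx k) + iy (Sx l)))
def GG' (r k l : ℕ) : KK := Gh' r k l * (iy (Sx l) * (ix (Sx k) + iy (Sx l)))

/-- Telescoping identity for the summand. -/
theorem tele (r k l : ℕ) (n : KK) (hn : n = (r:KK)+2) :
    4*(n^2-1) * (2*(2*n+1)*(n+1)^5*c0 n * trm (r+3) k l - c1 n * trm (r+2) k l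
      - 2*n*c2 n * trm (r+1) k l + n*(n-1)^5*c0 (n+1) * trm r k l) =
    n*(n-1)*((GG r (k+1) l - GG r k l) + (GG' r k (l+1) - GG' r k l)) := by
  have e1 : GG r (k+1) l = base r k l * ((ix (Sx k)+n-1)*(ix (Sx k)-n-1)^2*(ix (Sx k)+iy (Sx l)+n-1)) * XX n (ix (Sx k) + 1) (iy (Sx l)) := by
    rw [← base_x r k l n _ _ hn rfl rfl]
    simp only [GG, Gh, Sx_succ, map_add, map_one, hn]
    ring
  have e2 : GG' r k (l+1) = base r k l * ((iy (Sx l)+n-1)*(iy (Sx l)-n-1)^2*(ix (Sx k)+iy (Sx l)+n-1)) * XX n (iy (Sx l) + 1) (ix (Sx k)) := by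
    rw [← base_y r k l n _ _ hn rfl rfl]
    simp only [GG', Gh', Sx_succ, map_add, map_one, hn]
    ring
  have e3 : GG r k l = base r k l * (ix (Sx k)^3 * (ix (Sx k) + iy (Sx l)) * XX n (ix (Sx k)) (iy (Sx l))) := by
    simp only [GG, Gh, hn]; ring
  have e4 : GG' r k l = base r k l * (iy (Sx l)^3 * (ix (Sx k) + iy (Sx l)) * XX n (iy (Sx l)) (ix (Sx k))) := by
    simp only [GG', Gh', hn]; ring
  rw [e1, e2, e3, e4, trm3 r k l n _ _ hn rfl rfl, trm2 r k l n _ _ hn rfl rfl,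
    trm1 r k l n _ _ hn rfl rfl, trm0 r k l n _ _ hn rfl rfl]
  have := cert_identity n (ix (Sx k)) (iy (Sx l))
  generalize XX n (ix (Sx k)) (iy (Sx l)) = X1 at *
  generalize XX n (iy (Sx l)) (ix (Sx k)) = X2 at *
  generalize XX n (ix (Sx k) + 1) (iy (Sx l)) = X3 at *
  generalize XX n (iy (Sx l) + 1) (ix (Sx k)) = X4 at *
  generalize c0 n = d0 at *
  generalize c0 (n+1) = d3 at *
  generalize c1 n = d1 at *
  generalize c2 n = d2 at *
  generalize ix (Sx k) = s at *
  generalize iy (Sx l) = t at *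
  generalize (s+n-1)*(s+n)*(s+n+1)*((t+n-1)*(t+n)*(t+n+1)) *((s+t+n-1)*(s+t+n)*(s+t+n+1)) = T3 at *
  generalize (s+n-1)*(s+n)*((t+n-1)*(t+n))*((s+t+n-1)*(s+t+n))*((s-n-1)^2*(t-n-1)^2) = T2 at *
  generalize (s+n-1)*(t+n-1)*(s+t+n-1)*((s-n-1)^2*(t-n-1)^2*((s-n)^2*(t-n)^2)) = T1 at *
  generalize (s-n-1)^2*(t-n-1)^2*((s-n)^2*(t-n)^2)*((s-n+1)^2*(t-n+1)^2) = T0 at *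
  generalize (s+n-1)*(s-n-1)^2*(s+t+n-1) = Y1 at *
  generalize (t+n-1)*(t-n-1)^2*(s+t+n-1) = Y2 at *
  generalize s^3*(s+t) = Y3 at *
  generalize t^3*(s+t) = Y4 at *
  generalize base r k l = B at *
  linear_combination (B * n * (n-1)) * this

theorem ev_mul (j : DN →+* KK) (z : KK) (P Q : Polynomial DN) :
    (P * Q).eval₂ j z = P.eval₂ j z * Q.eval₂ j z :=
  @Polynomial.eval₂_mul DN KK _ P Q (CommRing.toCommSemiring : CommSemiring KK) j z

theorem ev_X (j : DN →+* KK) (z : KK) : (Polynomial.X : Polynomial DN).eval₂ j z = z :=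
  Polynomial.eval₂_X j z
theorem ev_C (j : DN →+* KK) (z : KK) (a : DN) : (Polynomial.C a : Polynomial DN).eval₂ j z = j a :=
  Polynomial.eval₂_C j z
theorem ev_one (j : DN →+* KK) (z : KK) : (1 : Polynomial DN).eval₂ j z = 1 :=
  Polynomial.eval₂_one j z
theorem ev_add (j : DN →+* KK) (z : KK) (P Q : Polynomial DN) :
    (P + Q).eval₂ j z = P.eval₂ j z + Q.eval₂ j z := Polynomial.eval₂_add j z
theorem ev_natCast (j : DN →+* KK) (z : KK) (n : ℕ) : (n : Polynomial DN).eval₂ j z = n :=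
  Polynomial.eval₂_natCast j z n
theorem ev_pow (j : DN →+* KK) (z : KK) (P : Polynomial DN) (n : ℕ) :
    (P ^ n).eval₂ j z = P.eval₂ j z ^ n := by
  induction n with
  | zero => rw [pow_zero, pow_zero, ev_one]
  | succ n ih => rw [pow_succ, pow_succ, ev_mul, ih]
theorem ev_sum (j : DN →+* KK) (z : KK) (n : ℕ) (f : ℕ → Polynomial DN) :
    (∑ i ∈ Finset.range n, f i).eval₂ j z = ∑ i ∈ Finset.range n, (f i).eval₂ j z := by
  induction n with
  | zero => simp
  | succ n ih => rw [Finset.sum_range_succ, Finset.sum_range_succ, ev_add, ih]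

theorem eval2_poch (j : DN →+* KK) (z : KK) (P : Polynomial DN) (n : ℕ) :
    (poch P n).eval₂ j z = poch (P.eval₂ j z) n := by
  induction n with
  | zero => simp [poch]
  | succ n ih =>
    rw [poch_succ, poch_succ, ev_mul, ih, ev_add, ev_add,
      ev_natCast, ev_one]

theorem map_hv' (j : DN →+* KK) (n : DN) (l : List ℤ) :
    j (hv n l) = hv (j n) l := by
  induction l with
  | nil => simp [hv]
  | cons c l ih => rw [hv, hv, map_add, map_mul, ih, map_intCast]

theorem natDegree_poch (P : Polynomial DN) (hP : P.natDegree ≤ 1) (n : ℕ) : (poch P n).natDegree ≤ n := by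
  induction n with
  | zero => simp [poch]
  | succ n ih =>
    rw [poch_succ]
    refine Polynomial.natDegree_mul_le_of_le ih ?_
    refine Polynomial.natDegree_add_le_of_degree_le hP ?_
    refine Polynomial.natDegree_add_le_of_degree_le ?_ ?_
    · simp
    · simp

/-- Generic version of `base`. -/
def bb (i j : DN →+* KK) (r k l : ℕ) : KK :=
  kap (r.factorial : ℚ) * (poch (i (Sx k)) r * i (ww (r+3) k)) *
    (poch (j (Sx l)) r * j (ww (r+3) l)) * poch (i (Sx k) + j (Sx l)) r

theorem van_gen (i j : DN →+* KK) (hij : ∀ a b, TT (i a * j b) = a.snd * b.snd)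
    (hk : ∀ c, kap c = j (TrivSqZeroExt.inl c)) (r l : ℕ) (Z : Polynomial DN) (hZ : Z.natDegree ≤ 6)
    (a : DN) :
    ∑ k ∈ Finset.range (r+4), TT (bb i j r k l * (Z.eval₂ j (i (Sx k))) * j a) = 0 := by
  rw [← res_sum (r+3) i j hij (Polynomial.C (TrivSqZeroExt.inl (r.factorial : ℚ) * (poch (Sx l) r * ww (r+3) l) * a)
    * poch Polynomial.X r * poch (Polynomial.X + Polynomial.C (Sx l)) r * Z)]
  · refine Finset.sum_congr rfl fun k _ => ?_
    congr 1
    rw [ev_mul, ev_mul, ev_mul, eval2_poch, eval2_poch, ev_add,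
      ev_C, ev_C, ev_X, map_mul, map_mul, map_mul, map_poch', ← hk, bb]
    ring
  · have h1 : (poch (Polynomial.X : Polynomial DN) r).natDegree ≤ r :=
      natDegree_poch _ Polynomial.natDegree_X_le r
    have h2 : (poch (Polynomial.X + Polynomial.C (Sx l) : Polynomial DN) r).natDegree ≤ r :=
      natDegree_poch _ (Polynomial.natDegree_add_le_of_degree_le Polynomial.natDegree_X_le (by simp)) r
    have h3 := Polynomial.natDegree_mul_le_of_le (Polynomial.natDegree_mul_le_of_le
      (Polynomial.natDegree_mul_le_of_le
      (Polynomial.natDegree_C (TrivSqZeroExt.inl (r.factorial : ℚ) * (poch (Sx l) r * ww (r+3) l) * a)).le h1) h2) hZ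
    refine h3.trans ?_
    omega

theorem vanA (i j : DN →+* KK) (hij : ∀ a b, TT (i a * j b) = a.snd * b.snd)
    (hk : ∀ c, kap c = j (TrivSqZeroExt.inl c)) (r l : ℕ) (a : DN) :
    ∑ k ∈ Finset.range (r+4),
      TT (bb i j r k l * (i (Sx k)^2 * XX ((r:KK)+2) (i (Sx k)) (j (Sx l))) * j a) = 0 := by
  have := van_gen i j hij hk r l (Polynomial.X^2 * ∑ u ∈ Finset.range 5, ∑ v ∈ Finset.range 6,
    Polynomial.C (hv ((r:DN)+2) (cf u v)) * Polynomial.X^u * Polynomial.C (Sx l)^v) ?_ a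
  · rw [← this]
    refine Finset.sum_congr rfl fun k _ => ?_
    congr 3
    rw [ev_mul, ev_pow, ev_X, XX, ev_sum]
    congr 1
    refine Finset.sum_congr rfl fun u _ => ?_
    rw [ev_sum]
    refine Finset.sum_congr rfl fun v _ => ?_
    rw [ev_mul, ev_mul, ev_pow, ev_X, ev_pow,
      ev_C, ev_C, map_hv', map_add, map_natCast, map_ofNat]
  · refine Polynomial.natDegree_mul_le_of_le (m := 2) (n := 4) (Polynomial.natDegree_X_pow_le 2) ?_
    refine Polynomial.natDegree_sum_le_of_forall_le _ _ fun u hu => ?_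
    refine Polynomial.natDegree_sum_le_of_forall_le _ _ fun v hv => ?_
    rw [← map_pow]
    refine (Polynomial.natDegree_mul_C_le _ _).trans ?_
    refine (Polynomial.natDegree_C_mul_le _ _).trans ?_
    refine (Polynomial.natDegree_X_pow_le u).trans ?_
    have := Finset.mem_range.1 hu
    omega

theorem vanB (i j : DN →+* KK) (hij : ∀ a b, TT (i a * j b) = a.snd * b.snd)
    (hk : ∀ c, kap c = j (TrivSqZeroExt.inl c)) (r l : ℕ) (a : DN) :
    ∑ k ∈ Finset.range (r+4),
      TT (bb i j r k l * (j (Sx l)^2 * XX ((r:KK)+2) (j (Sx l)) (i (Sx k))) * j a) = 0 := by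
  have := van_gen i j hij hk r l (Polynomial.C (Sx l)^2 * ∑ u ∈ Finset.range 5, ∑ v ∈ Finset.range 6,
    Polynomial.C (hv ((r:DN)+2) (cf u v)) * Polynomial.C (Sx l)^u * Polynomial.X^v) ?_ a
  · rw [← this]
    refine Finset.sum_congr rfl fun k _ => ?_
    congr 3
    rw [ev_mul, ev_pow, ev_C, XX, ev_sum]
    congr 1
    refine Finset.sum_congr rfl fun u _ => ?_
    rw [ev_sum]
    refine Finset.sum_congr rfl fun v _ => ?_
    rw [ev_mul, ev_mul, ev_pow, ev_pow, ev_X,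
      ev_C, ev_C, map_hv', map_add, map_natCast, map_ofNat]
  · rw [← map_pow]
    refine (Polynomial.natDegree_C_mul_le _ _).trans ?_
    refine Polynomial.natDegree_sum_le_of_forall_le _ _ fun u hu => ?_
    refine Polynomial.natDegree_sum_le_of_forall_le _ _ fun v hv => ?_
    rw [← map_pow, ← map_mul]
    refine (Polynomial.natDegree_C_mul_le _ _).trans ?_
    refine (Polynomial.natDegree_X_pow_le v).trans ?_
    have := Finset.mem_range.1 hv
    omega

theorem kap_iy (c : ℚ) : kap c = iy (TrivSqZeroExt.inl c) := rfl
theorem kap_ix (c : ℚ) : kap c = ix (TrivSqZeroExt.inl c) := by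
  rw [kap_apply, ix_apply]; ext <;> simp

theorem TT_iy_ix (a b : DN) : TT (iy a * ix b) = a.snd * b.snd := by
  rw [mul_comm (iy a), TT_ix_iy, mul_comm]

theorem base_xy (r k l : ℕ) : base r k l = bb ix iy r k l := base_eq r k l
theorem base_yx (r k l : ℕ) : base r k l = bb iy ix r l k := by
  rw [base_eq, bb, add_comm (iy (Sx l))]; ring

theorem van1 (r l : ℕ) (a : DN) : ∑ k ∈ Finset.range (r+4), TT (Gh r k l * iy a) = 0 := by
  rw [← vanA ix iy TT_ix_iy kap_iy r l a]
  simp only [Gh, base_xy]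
theorem van2 (r l : ℕ) (a : DN) : ∑ k ∈ Finset.range (r+4), TT (Gh' r k l * iy a) = 0 := by
  rw [← vanB ix iy TT_ix_iy kap_iy r l a]
  simp only [Gh', base_xy]
theorem van3 (r k : ℕ) (a : DN) : ∑ l ∈ Finset.range (r+4), TT (Gh' r k l * ix a) = 0 := by
  rw [← vanA iy ix TT_iy_ix kap_ix r k a]
  simp only [Gh', base_yx]
theorem van4 (r k : ℕ) (a : DN) : ∑ l ∈ Finset.range (r+4), TT (Gh r k l * ix a) = 0 := by
  rw [← vanB iy ix TT_iy_ix kap_ix r k a]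
  simp only [Gh, base_yx]

theorem abel_sum {R : Type*} [CommRing R] (g f : ℕ → R) (h0 : g 0 = 0) (M : ℕ) :
    ∑ k ∈ Finset.range M, (g (k+1) - g k) * f k + ∑ k ∈ Finset.range M, g k * (f k - f (k-1)) =
      g M * f (M-1) := by
  induction M with
  | zero => simp [h0]
  | succ M ih =>
    rw [Finset.sum_range_succ, Finset.sum_range_succ, Nat.add_sub_cancel]
    linear_combination ih

theorem Sx0 : Sx 0 ^ 2 = 0 := by rw [Sx, pow_two]; simp [ee_sq]

theorem Gh_zero (r l : ℕ) : Gh r 0 l = 0 := by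
  rw [Gh, ← map_pow, Sx0, map_zero, zero_mul, mul_zero]
theorem Gh'_zero (r k : ℕ) : Gh' r k 0 = 0 := by
  rw [Gh', ← map_pow, Sx0, map_zero, zero_mul, mul_zero]
theorem GG_zero (r l : ℕ) : GG r 0 l = 0 := by rw [GG, Gh_zero, zero_mul]
theorem GG'_zero (r k : ℕ) : GG' r k 0 = 0 := by rw [GG', Gh'_zero, zero_mul]
theorem GG_top (r l : ℕ) : GG r (r+4) l = 0 := by
  rw [GG, Gh, base_eq, ww_zero (by omega : r + 3 < r + 4), map_zero]; ring
theorem GG'_top (r k : ℕ) : GG' r k (r+4) = 0 := by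
  rw [GG', Gh', base_eq, ww_zero (by omega : r + 3 < r + 4), map_zero]; ring

/-- Difference conditions for `F`. -/
structure Good (F : ℕ → ℕ → KK) (a b c d : ℕ → DN) : Prop where
  hx : ∀ k l, (ix (Sx (k+1)) * (ix (Sx (k+1)) + iy (Sx l))) * (F (k+1) l - F k l) = iy (a l) + ix (b (k+1))
  hy : ∀ k l, (iy (Sx (l+1)) * (ix (Sx k) + iy (Sx (l+1)))) * (F k (l+1) - F k l) = iy (c (l+1)) + ix (d k)

theorem sumG {F : ℕ → ℕ → KK} {a b c d : ℕ → DN} (h : Good F a b c d) (r : ℕ) :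
    ∑ k ∈ Finset.range (r+4), ∑ l ∈ Finset.range (r+4), TT ((GG r (k+1) l - GG r k l) * F k l) = 0 := by
  have h1 : ∀ l, ∑ k ∈ Finset.range (r+4), TT ((GG r (k+1) l - GG r k l) * F k l) =
      - ∑ k ∈ Finset.range (r+4), (TT (Gh r k l * iy (a l)) + TT (Gh r k l * ix (b k))) := by
    intro l
    have := abel_sum (fun k => GG r k l) (fun k => F k l) (GG_zero r l) (r+4)
    rw [GG_top, zero_mul] at this
    rw [← map_sum, eq_neg_of_add_eq_zero_left this, map_neg, map_sum]
    congr 1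
    refine Finset.sum_congr rfl fun k _ => ?_
    rw [← TT.map_add, ← mul_add]
    congr 1
    cases k with
    | zero => rw [GG_zero, Gh_zero, zero_mul, zero_mul]
    | succ k =>
      rw [Nat.add_sub_cancel, ← h.hx k l, GG]; ring
  rw [Finset.sum_comm]
  simp only [h1]
  rw [Finset.sum_neg_distrib, neg_eq_zero]
  simp only [Finset.sum_add_distrib]
  simp only [van1]
  rw [Finset.sum_comm]
  simp only [van4]
  simp

theorem sumG' {F : ℕ → ℕ → KK} {a b c d : ℕ → DN} (h : Good F a b c d) (r : ℕ) :
    ∑ k ∈ Finset.range (r+4), ∑ l ∈ Finset.range (r+4), TT ((GG' r k (l+1) - GG' r k l) * F k l) = 0 := by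
  have h1 : ∀ k, ∑ l ∈ Finset.range (r+4), TT ((GG' r k (l+1) - GG' r k l) * F k l) =
      - ∑ l ∈ Finset.range (r+4), (TT (Gh' r k l * ix (d k)) + TT (Gh' r k l * iy (c l))) := by
    intro k
    have := abel_sum (fun l => GG' r k l) (fun l => F k l) (GG'_zero r k) (r+4)
    rw [GG'_top, zero_mul] at this
    rw [← map_sum, eq_neg_of_add_eq_zero_left this, map_neg, map_sum]
    congr 1
    refine Finset.sum_congr rfl fun l _ => ?_
    rw [← TT.map_add, ← mul_add]
    congr 1
    cases l with
    | zero => rw [GG'_zero, Gh'_zero, zero_mul, zero_mul]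
    | succ l =>
      rw [Nat.add_sub_cancel, add_comm (ix (d k)), ← h.hy k l, GG']; ring
  simp only [h1]
  rw [Finset.sum_neg_distrib, neg_eq_zero]
  simp only [Finset.sum_add_distrib]
  simp only [van3]
  rw [Finset.sum_comm]
  simp only [van2]
  simp

theorem Lam_rec {F : ℕ → ℕ → KK} {a b c d : ℕ → DN} (h : Good F a b c d) (r : ℕ) (n : ℚ) (hn : n = r + 2) :
    2*(2*n+1)*(n+1)^5*c0 n * Lam (r+3) F - c1 n * Lam (r+2) F
      - 2*n*c2 n * Lam (r+1) F + n*(n-1)^5*c0 (n+1) * Lam r F = 0 := by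
  have key : ∀ k l, TT ((kap (4*(n^2-1)*(2*(2*n+1)*(n+1)^5*c0 n)) * (trm (r+3) k l * F k l)
      - kap (4*(n^2-1)*c1 n) * (trm (r+2) k l * F k l)
      - kap (4*(n^2-1)*(2*n*c2 n)) * (trm (r+1) k l * F k l)
      + kap (4*(n^2-1)*(n*(n-1)^5*c0 (n+1))) * (trm r k l * F k l))) =
      n*(n-1) * (TT ((GG r (k+1) l - GG r k l) * F k l) + TT ((GG' r k (l+1) - GG' r k l) * F k l)) := by
    intro k l
    rw [← TT.map_add, ← TT_kap]
    congr 1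
    have hk : kap n = (r:KK) + 2 := by rw [hn, map_add, map_natCast, map_ofNat]
    have e0 : kap (c0 n) = c0 (kap n) := by simp only [c0, map_add, map_sub, map_mul, map_pow, map_ofNat]
    have e1 : kap (c1 n) = c1 (kap n) := by simp only [c1, map_add, map_sub, map_mul, map_pow, map_ofNat]
    have e2 : kap (c2 n) = c2 (kap n) := by simp only [c2, map_add, map_sub, map_mul, map_pow, map_ofNat]
    have e3 : kap (c0 (n+1)) = c0 (kap n+1) := by
      simp only [c0, map_add, map_sub, map_mul, map_pow, map_ofNat, map_one]
    have T := tele r k l (kap n) hk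
    simp only [map_mul, map_sub, map_add, map_pow, map_one, map_ofNat, e0, e1, e2, e3]
    generalize c0 (kap n) = d0 at *
    generalize c0 (kap n+1) = d3 at *
    generalize c1 (kap n) = d1 at *
    generalize c2 (kap n) = d2 at *
    generalize kap n = N at *
    linear_combination (F k l) * T
  have S : ∑ k ∈ Finset.range (r+4), ∑ l ∈ Finset.range (r+4), TT ((kap (4*(n^2-1)*(2*(2*n+1)*(n+1)^5*c0 n)) * (trm (r+3) k l * F k l)
      - kap (4*(n^2-1)*c1 n) * (trm (r+2) k l * F k l)
      - kap (4*(n^2-1)*(2*n*c2 n)) * (trm (r+1) k l * F k l)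
      + kap (4*(n^2-1)*(n*(n-1)^5*c0 (n+1))) * (trm r k l * F k l))) = 0 := by
    simp only [key, ← Finset.mul_sum, Finset.sum_add_distrib]
    rw [sumG h, sumG' h]; ring
  simp only [map_add, map_sub, TT_kap, ← Finset.mul_sum, Finset.sum_add_distrib, Finset.sum_sub_distrib] at S
  rw [← Lam_ext (r+3) (r+4) (by omega), ← Lam_ext (r+2) (r+4) (by omega), ← Lam_ext (r+1) (r+4) (by omega),
    ← Lam_ext r (r+4) (by omega)] at S
  have hne : 4*(n^2-1) ≠ 0 := by
    rw [hn]; have : (0:ℚ) ≤ r := by positivity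
    nlinarith
  apply mul_left_cancel₀ hne
  linear_combination S

def yy (F : ℕ → ℕ → KK) (n : ℕ) : ℚ := (-1)^(n+1) * (n.centralBinom : ℚ) * Lam n F

theorem yy_rec {F : ℕ → ℕ → KK} {a b c d : ℕ → DN} (h : Good F a b c d) : Rec1 (yy F) := by
  intro n hn
  obtain ⟨r, rfl⟩ : ∃ r, n = r + 2 := ⟨n - 2, by omega⟩
  have L := Lam_rec h r ((r+2 : ℕ) : ℚ) (by push_cast; ring)
  have C : ∀ m : ℕ, ((m+1).centralBinom : ℚ) = 2 * (2*m+1) / (m+1) * m.centralBinom := by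
    intro m
    have := Nat.succ_mul_centralBinom_succ m
    have h2 : ((m:ℚ)+1) * (m+1).centralBinom = 2*(2*m+1) * m.centralBinom := by exact_mod_cast this
    have : (m:ℚ)+1 ≠ 0 := by positivity
    field_simp
    linarith
  have i1 : r + 2 - 1 = r + 1 := by omega
  have i2 : r + 2 - 2 = r := by omega
  rw [i1, i2]
  simp only [yy, C (r+2), C (r+1), C r]
  change _ * c0 _ * _ + c1 _ * _ - _ * c2 _ * _ - _ * c0 _ * _ = 0
  generalize c0 ((r+2:ℕ):ℚ) = d0 at *
  generalize c0 (((r+2:ℕ):ℚ)+1) = d3 at *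
  generalize c1 ((r+2:ℕ):ℚ) = d1 at *
  generalize c2 ((r+2:ℕ):ℚ) = d2 at *
  generalize (r.centralBinom : ℚ) = B
  generalize Lam (r+3) F = L3 at *
  rw [show r + 2 + 1 = r + 3 from rfl] at *
  generalize Lam (r+3) F = L3 at *
  generalize Lam (r+2) F = L2 at *
  generalize Lam (r+1) F = L1 at *
  generalize Lam r F = L0 at *
  have q1 : (r:ℚ)+1 ≠ 0 := by positivity
  have q2 : (r:ℚ)+2 ≠ 0 := by positivity
  have q3 : (r:ℚ)+3 ≠ 0 := by positivity
  push_cast at *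
  have p1 : (-1:ℚ)^(r+2+1) = -(-1)^r := by ring
  have p2 : (-1:ℚ)^(r+3+1) = (-1)^r := by ring
  have p3 : (-1:ℚ)^(r+1+1) = (-1)^r := by ring
  have p4 : (-1:ℚ)^(r+1) = -(-1)^r := by ring
  simp only [p1, p2, p3, p4]
  generalize (-1:ℚ)^r = E
  have e3 : (r:ℚ)+2+1 = r+3 := by ring
  have e2 : (r:ℚ)+1+1 = r+2 := by ring
  rw [e3] at *
  rw [e2]
  field_simp
  linear_combination (E*B*4*(2*r+1)*(2*r+3)*((r:ℚ)+3)^0) * L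

/-- The inverse of `z + ε`. -/
def dinv (z : ℕ) : DN := TrivSqZeroExt.inl (1/(z:ℚ)) + TrivSqZeroExt.inr (-1/(z:ℚ)^2)

/-- The inverse of `z + x + y`. -/
def iv (z : ℕ) : KK :=
  TrivSqZeroExt.inl (TrivSqZeroExt.inl (1/(z:ℚ)) + TrivSqZeroExt.inr (-1/(z:ℚ)^2)) +
  TrivSqZeroExt.inr (TrivSqZeroExt.inl (-1/(z:ℚ)^2) + TrivSqZeroExt.inr (2/(z:ℚ)^3))

theorem Sx_dinv (k : ℕ) : Sx (k+1) * dinv (k+1) = 1 := by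
  have : (k:ℚ)+1 ≠ 0 := by positivity
  ext
  · simp [Sx, dinv, ee]
    field_simp
  · simp [Sx, dinv, ee]
    field_simp
    ring

theorem iv_mul (k l z : ℕ) (hz : k + l = z + 1) : (ix (Sx k) + iy (Sx l)) * iv (z+1) = 1 := by
  have h1 : (z:ℚ)+1 ≠ 0 := by positivity
  have h2 : (k:ℚ) + l = z + 1 := by exact_mod_cast hz
  have h3 : ix (Sx k) + iy (Sx l) = TrivSqZeroExt.inl (TrivSqZeroExt.inl ((z:ℚ)+1) + TrivSqZeroExt.inr 1) +
      TrivSqZeroExt.inr (TrivSqZeroExt.inl 1) := by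
    rw [ix_apply, iy_apply, ← h2]
    ext <;> simp [Sx, ee]
  rw [h3, iv]
  ext
  · simp
    field_simp
  · simp
    field_simp
    ring
  · simp
    field_simp
    ring
  · simp
    field_simp
    ring

/-- Second-order harmonic numbers with parameter. -/
def H2 (l : ℕ) : DN := ∑ j ∈ Finset.range l, dinv (j+1) ^ 2
def H1 (l : ℕ) : DN := ∑ j ∈ Finset.range l, dinv (j+1)

def F1 (k l : ℕ) : KK :=
  ∑ m ∈ Finset.range k, (iy (H2 l) * ix (dinv (m+1)) - (iy (H2 l) + ix (H2 m)) * iv (m+l+1))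
    - ∑ m ∈ Finset.range l, iy (H2 m) * iv (m+1)

def F2 (k l : ℕ) : KK := ∑ m ∈ Finset.range (k+l), iv (m+1) - ix (H1 k)

def F0 (_k _l : ℕ) : KK := ix ee * iy ee

theorem good0 : Good F0 (fun _ => 0) (fun _ => 0) (fun _ => 0) (fun _ => 0) := by
  constructor <;> intro k l <;> rw [F0, F0, sub_self, mul_zero, map_zero, map_zero, add_zero]

theorem ring_a (s t I J H H' : KK) (h1 : s * I = 1) (h2 : (s + t) * J = 1) :
    s * (s + t) * (H * I - (H + H') * J) = t * H - s * H' := by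
  linear_combination (s+t)*H * h1 - s*(H+H')*h2

theorem ring_b (s t I J T : KK) (h1 : s * I = 1) (h2 : (s + t) * J = 1) (h3 : t * T = 1) :
    (T + I) * J = I * T := by
  have : T + I = I * T * (s+t) := by linear_combination (-T)*h1 - I*h3
  rw [this]
  linear_combination I * T * h2

theorem F1_x (k l : ℕ) : F1 (k+1) l - F1 k l =
    iy (H2 l) * ix (dinv (k+1)) - (iy (H2 l) + ix (H2 k)) * iv (k+l+1) := by
  rw [F1, F1, Finset.sum_range_succ]; ring

theorem F1_y (k l : ℕ) : F1 k (l+1) - F1 k l =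
    ix (H2 k) * iy (dinv (l+1)) - (ix (H2 k) + iy (H2 l)) * iv (k+l+1) := by
  induction k with
  | zero =>
    rw [F1, F1, Finset.sum_range_zero, Finset.sum_range_zero, Finset.sum_range_succ]
    rw [show H2 0 = 0 by simp [H2], map_zero, zero_add, zero_add]
    ring
  | succ k ih =>
    have e1 := F1_x k l
    have e2 := F1_x k (l+1)
    have h1 : ix (Sx (k+1)) * ix (dinv (k+1)) = 1 := by rw [← map_mul, Sx_dinv, map_one]
    have h3 : iy (Sx (l+1)) * iy (dinv (l+1)) = 1 := by rw [← map_mul, Sx_dinv, map_one]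
    have h2 := iv_mul (k+1) (l+1) (k+l+1) (by omega)
    have key := ring_b _ _ _ _ _ h1 h2 h3
    have e3 : iy (H2 (l+1)) = iy (H2 l) + iy (dinv (l+1))^2 := by
      rw [← map_pow, ← map_add, H2, Finset.sum_range_succ, ← H2]
    have e4 : ix (H2 (k+1)) = ix (H2 k) + ix (dinv (k+1))^2 := by
      rw [← map_pow, ← map_add, H2, Finset.sum_range_succ, ← H2]
    rw [e3] at e2
    rw [e4]
    rw [show k + (l+1) + 1 = k + l + 1 + 1 by ring] at e2
    rw [show k + 1 + l + 1 = k + l + 1 + 1 by ring]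
    generalize iy (H2 l) = A1 at *
    generalize ix (H2 k) = A2 at *
    generalize iv (k+l+1+1) = J at *
    generalize iv (k+l+1) = J' at *
    generalize ix (dinv (k+1)) = I at *
    generalize iy (dinv (l+1)) = T at *
    linear_combination ih - e1 + e2 - (T - I) * key

theorem good1 : Good F1 (fun l => Sx l * H2 l) (fun k => - (Sx k * H2 (k-1)))
    (fun l => - (Sx l * H2 (l-1))) (fun k => Sx k * H2 k) := by
  constructor
  · intro k l
    have h1 : ix (Sx (k+1)) * ix (dinv (k+1)) = 1 := by rw [← map_mul, Sx_dinv, map_one]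
    have h2 := iv_mul (k+1) l (k+l) (by omega)
    rw [F1_x, ring_a _ _ _ _ _ _ h1 h2, Nat.add_sub_cancel, map_neg, map_mul, map_mul]
    ring
  · intro k l
    have h1 : iy (Sx (l+1)) * iy (dinv (l+1)) = 1 := by rw [← map_mul, Sx_dinv, map_one]
    have h2 := iv_mul k (l+1) (k+l) (by omega)
    rw [add_comm (ix (Sx k))] at h2 ⊢
    rw [F1_y, ring_a _ _ _ _ _ _ h1 h2, Nat.add_sub_cancel, map_neg, map_mul, map_mul]
    ring

theorem good2 : Good F2 (fun l => - Sx l) (fun _ => 0) (fun l => Sx l) (fun _ => 0) := by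
  constructor
  · intro k l
    have h1 : ix (Sx (k+1)) * ix (dinv (k+1)) = 1 := by rw [← map_mul, Sx_dinv, map_one]
    have h2 := iv_mul (k+1) l (k+l) (by omega)
    rw [map_neg, map_zero, F2, F2, show k + 1 + l = k + l + 1 by ring, Finset.sum_range_succ, H1, Finset.sum_range_succ,
      map_add, ← H1]
    generalize iy (Sx l) = t at *
    generalize ix (Sx (k+1)) = s at *
    linear_combination s * h2 - (s+t) * h1
  · intro k l
    have h2 := iv_mul k (l+1) (k+l) (by omega)
    rw [map_zero, F2, F2, ← add_assoc, Finset.sum_range_succ]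
    generalize iy (Sx (l+1)) = t at *
    generalize ix (Sx k) = s at *
    linear_combination t * h2

theorem yy00 : yy F0 0 = -1 := by decide +kernel
theorem yy01 : yy F0 1 = 42 := by decide +kernel
theorem yy02 : yy F0 2 = -17934 := by decide +kernel
theorem yy10 : yy F1 0 = 0 := by decide +kernel
theorem yy11 : yy F1 1 = 87 := by decide +kernel
theorem yy12 : yy F1 2 = -1190161/32 := by decide +kernel
theorem yy20 : yy F2 0 = 0 := by decide +kernel
theorem yy21 : yy F2 1 = 101 := by decide +kernel
theorem yy22 : yy F2 2 = -344923/8 := by decide +kernel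

theorem a0_ne (n : ℕ) (hn : 2 ≤ n) : a0 (n:ℚ) ≠ 0 := by
  obtain ⟨r, rfl⟩ : ∃ r, n = r + 2 := ⟨n - 2, by omega⟩
  have h : a0 ((r+2:ℕ):ℚ) = 41218*(r:ℚ)^3 + 198849*r^2 + 320790*r + 173057 := by
    rw [a0]; push_cast; ring
  rw [h]; positivity

theorem rec_unique (u v : ℕ → ℚ) (c : ℚ) (hu : Rec1 u) (hv : Rec1 v) (h0 : c * u 0 = v 0) (h1 : c * u 1 = v 1)
    (h2 : c * u 2 = v 2) : ∀ n, c * u n = v n := by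
  have key : ∀ n, c * u n = v n ∧ c * u (n+1) = v (n+1) ∧ c * u (n+2) = v (n+2) := by
    intro n
    induction n with
    | zero => exact ⟨h0, h1, h2⟩
    | succ n ih =>
      obtain ⟨i0, i1, i2⟩ := ih
      refine ⟨i1, i2, ?_⟩
      have e1 := hu (n+2) (by omega)
      have e2 := hv (n+2) (by omega)
      rw [show n + 2 - 1 = n + 1 by omega, show n + 2 - 2 = n by omega] at e1 e2
      rw [← i0, ← i1, ← i2] at e2
      have hne : (((n+2:ℕ):ℚ)+1)^6 * a0 ((n+2:ℕ):ℚ) ≠ 0 := by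
        have := a0_ne (n+2) (by omega)
        positivity
      apply mul_left_cancel₀ hne
      rw [show n + 1 + 2 = n + 2 + 1 by ring]
      linear_combination c * e1 - e2
  exact fun n => (key n).1

theorem dvd_Dlcm {n j : ℕ} (h1 : 1 ≤ j) (h2 : j ≤ n) : j ∣ Dlcm n :=
  Finset.dvd_lcm (f := id) (Finset.mem_Icc.2 ⟨h1, h2⟩)

theorem key_dvd (n k z D : ℕ) (hD : ∀ j, 1 ≤ j → j ≤ n → j ∣ D) (hk : k ≤ n) (h1 : 1 ≤ z) (h2 : z ≤ n + k) :
    z ∣ D * (n+k).choose k := by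
  rw [Nat.dvd_iff_prime_pow_dvd_dvd]
  intro p e hp hpe
  have hle : p^e ≤ n + k := (Nat.le_of_dvd h1 hpe).trans h2
  rcases Nat.lt_or_ge n (p^e) with hlt | hge
  · cases e with
    | zero => simp
    | succ e =>
      rw [pow_succ]
      refine Nat.mul_dvd_mul (hD _ (Nat.one_le_iff_ne_zero.2 (pow_ne_zero _ hp.ne_zero)) ?_) ?_
      · have : p^e * 2 ≤ p^(e+1) := by
          rw [pow_succ]; exact Nat.mul_le_mul_left _ hp.two_le
        omega
      · have hb : Nat.log p (n+k) < Nat.log p (n+k) + 1 := Nat.lt_succ_self _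
        have hf := Nat.factorization_choose' hp hb
        have hpos : 0 < ((n+k).choose k).factorization p := by
          rw [hf, Finset.card_pos]
          refine ⟨e+1, ?_⟩
          rw [Finset.mem_filter, Finset.mem_Ico]
          refine ⟨⟨by omega, ?_⟩, ?_⟩
          · have := Nat.le_log_of_pow_le hp.one_lt hle
            omega
          · rw [Nat.mod_eq_of_lt hlt, Nat.mod_eq_of_lt (by omega)]; omega
        exact Nat.dvd_of_factorization_pos hpos.ne'
  · exact Dvd.dvd.mul_right (hD _ (Nat.one_le_iff_ne_zero.2 (pow_ne_zero _ hp.ne_zero)) hge) _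

/-- Rational number that is an integer. -/
def IZ (q : ℚ) : Prop := ∃ z : ℤ, q = z

theorem IZ.add {a b : ℚ} (ha : IZ a) (hb : IZ b) : IZ (a + b) := by
  obtain ⟨x, rfl⟩ := ha; obtain ⟨y, rfl⟩ := hb; exact ⟨x + y, by push_cast; ring⟩
theorem IZ.mul {a b : ℚ} (ha : IZ a) (hb : IZ b) : IZ (a * b) := by
  obtain ⟨x, rfl⟩ := ha; obtain ⟨y, rfl⟩ := hb; exact ⟨x * y, by push_cast; ring⟩
theorem IZ.neg {a : ℚ} (ha : IZ a) : IZ (-a) := by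
  obtain ⟨x, rfl⟩ := ha; exact ⟨-x, by push_cast; ring⟩
theorem IZ_nat (n : ℕ) : IZ (n : ℚ) := ⟨n, by push_cast; rfl⟩
theorem IZ_zero : IZ 0 := ⟨0, by simp⟩
theorem IZ_div {a b : ℕ} (h : b ∣ a) : IZ ((a:ℚ) / b) := by
  obtain ⟨c, rfl⟩ := h
  rcases Nat.eq_zero_or_pos b with rfl | hb
  · exact ⟨0, by simp⟩
  · exact ⟨c, by push_cast; field_simp⟩
theorem IZ_sum {ι : Type*} (s : Finset ι) (f : ι → ℚ) (h : ∀ i ∈ s, IZ (f i)) : IZ (∑ i ∈ s, f i) := by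
  classical
  induction s using Finset.induction_on with
  | empty => simpa using IZ_zero
  | insert a s ha ih =>
    rw [Finset.sum_insert ha]
    exact (h a (Finset.mem_insert_self a s)).add (ih fun i hi => h i (Finset.mem_insert_of_mem hi))

/-- Elements with controlled denominators. -/
def IS (D : ℕ) (u : KK) : Prop :=
  IZ u.fst.fst ∧ IZ (D * u.snd.fst) ∧ IZ (D * u.fst.snd) ∧ IZ ((D:ℚ)^2 * u.snd.snd)

theorem IS.add {D : ℕ} {u v : KK} (hu : IS D u) (hv : IS D v) : IS D (u + v) := by
  obtain ⟨a1, a2, a3, a4⟩ := hu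
  obtain ⟨b1, b2, b3, b4⟩ := hv
  refine ⟨?_, ?_, ?_, ?_⟩
  · simpa using a1.add b1
  · simpa [mul_add] using a2.add b2
  · simpa [mul_add] using a3.add b3
  · simpa [mul_add] using a4.add b4
theorem IS.neg {D : ℕ} {u : KK} (hu : IS D u) : IS D (-u) := by
  obtain ⟨a1, a2, a3, a4⟩ := hu
  refine ⟨?_, ?_, ?_, ?_⟩
  · simpa using a1.neg
  · simpa using a2.neg
  · simpa using a3.neg
  · simpa using a4.neg
theorem IS.sub {D : ℕ} {u v : KK} (hu : IS D u) (hv : IS D v) : IS D (u - v) := by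
  rw [sub_eq_add_neg]; exact hu.add hv.neg
theorem IS.mul {D : ℕ} {u v : KK} (hu : IS D u) (hv : IS D v) : IS D (u * v) := by
  obtain ⟨a1, a2, a3, a4⟩ := hu
  obtain ⟨b1, b2, b3, b4⟩ := hv
  refine ⟨?_, ?_, ?_, ?_⟩
  · simpa using a1.mul b1
  · have := (a1.mul b2).add (b1.mul a2)
    convert this using 1
    simp; ring
  · have := (a1.mul b3).add (b1.mul a3)
    convert this using 1
    simp; ring
  · have := ((a1.mul b4).add (b1.mul a4)).add ((a2.mul b3).add (a3.mul b2))
    convert this using 1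
    simp; ring
theorem IS_kap {D : ℕ} {q : ℚ} (h : IZ q) : IS D (kap q) := by
  rw [kap_apply]
  refine ⟨?_, ?_, ?_, ?_⟩
  · simpa using h
  · simpa using IZ_zero
  · simpa using IZ_zero
  · simpa using IZ_zero
theorem IS_one {D : ℕ} : IS D 1 := by
  rw [← map_one kap]; exact IS_kap ⟨1, by simp⟩
theorem IS_zero {D : ℕ} : IS D 0 := by
  rw [← map_zero kap]; exact IS_kap IZ_zero
theorem IS_sum {D : ℕ} {ι : Type*} (s : Finset ι) (f : ι → KK) (h : ∀ i ∈ s, IS D (f i)) : IS D (∑ i ∈ s, f i) := by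
  classical
  induction s using Finset.induction_on with
  | empty => simpa using IS_zero
  | insert a s ha ih =>
    rw [Finset.sum_insert ha]
    exact (h a (Finset.mem_insert_self a s)).add (ih fun i hi => h i (Finset.mem_insert_of_mem hi))

theorem IS_ix {D : ℕ} {a : DN} (h1 : IZ a.fst) (h2 : IZ (D * a.snd)) : IS D (ix a) := by
  rw [ix_apply]
  refine ⟨?_, ?_, ?_, ?_⟩
  · simpa using h1
  · simpa using h2
  · simpa using IZ_zero
  · simpa using IZ_zero
theorem IS_iy {D : ℕ} {a : DN} (h1 : IZ a.fst) (h2 : IZ (D * a.snd)) : IS D (iy a) := by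
  rw [iy_apply]
  refine ⟨?_, ?_, ?_, ?_⟩
  · simpa using h1
  · simpa using IZ_zero
  · simpa using h2
  · simpa using IZ_zero

/-- Normalized rising product. -/
def bet (w : KK) (n z : ℕ) : KK := kap (1/(n.factorial : ℚ)) * poch ((z:KK) + w) n

theorem kap_mul_nat (n : ℕ) : kap (1/((n+1).factorial : ℚ)) * ((n:KK)+1) = kap (1/(n.factorial:ℚ)) := by
  rw [show ((n:KK)+1) = kap ((n:ℚ)+1) by rw [map_add, map_natCast, map_one], ← map_mul]
  congr 1
  rw [Nat.factorial_succ]; push_cast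
  have h1 : (n:ℚ)+1 ≠ 0 := by positivity
  have h2 : (n.factorial:ℚ) ≠ 0 := by positivity
  field_simp

theorem bet_pascal (w : KK) (n z : ℕ) : bet w (n+1) (z+1) = bet w (n+1) z + bet w n (z+1) := by
  have h := poch_shift ((z:KK) + w) n
  have hs := poch_succ ((z:KK) + w) n
  have hs1 := poch_succ ((z:KK) + w + 1) n
  have hk := kap_mul_nat n
  have e : (((z+1:ℕ):KK) + w) = (z:KK) + w + 1 := by push_cast; ring
  rw [bet, bet, bet, e, hs1, hs, ← h, ← hk]
  ring

theorem bet_IS (D N : ℕ) (w : KK) (hw : ∀ j, 1 ≤ j → j ≤ N → IS D (kap (1/(j:ℚ)) * w)) :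
    ∀ n, n ≤ N → ∀ z, IS D (bet w n z) := by
  intro n
  induction n with
  | zero =>
    intro _ z
    simpa [bet, poch] using IS_one
  | succ n ih =>
    intro hn z
    induction z with
    | zero =>
      have e : bet w (n+1) 0 = bet w n 0 * (1 + kap (1/((n+1:ℕ):ℚ)) * w) := by
        rw [bet, bet, poch_succ, ← kap_mul_nat n]
        have : kap (1/((n+1:ℕ):ℚ)) * ((n:KK)+1) = 1 := by
          rw [show ((n:KK)+1) = kap ((n:ℚ)+1) by rw [map_add, map_natCast, map_one], ← map_mul, ← map_one kap]
          congr 1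
          have h1 : (n:ℚ)+1 ≠ 0 := by positivity
          push_cast; field_simp
        rw [Nat.cast_zero, zero_add]
        generalize kap (1/((n+1:ℕ):ℚ)) = c at *
        generalize kap (1/((n+1).factorial:ℚ)) = c' at *
        generalize poch w n = P
        linear_combination (-c' * P * w) * this
      rw [e]
      exact (ih (by omega) 0).mul (IS_one.add (hw (n+1) (by omega) hn))
    | succ z ihz =>
      rw [bet_pascal]
      exact ihz.add (ih (by omega) (z+1))

theorem IZ_harm (D n j : ℕ) (hD : ∀ j, 1 ≤ j → j ≤ n → j ∣ D) (hj : j ≤ n) : IZ ((D:ℚ) * harmonic j) := by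
  rw [harmonic, Finset.mul_sum]
  refine IZ_sum _ _ fun i hi => ?_
  have := Finset.mem_range.1 hi
  rw [← div_eq_mul_inv]
  exact IZ_div (hD (i+1) (by omega) (by omega))

/-- The one-variable factor. -/
def al (n k : ℕ) : DN := TrivSqZeroExt.inl (n.factorial : ℚ) * poch (Sx k) n * ww n k

theorem inl_cast (q : ℚ) (i : DN →+* KK) (hi : ∀ c, kap c = i (TrivSqZeroExt.inl c)) :
    i (TrivSqZeroExt.inl q) = kap q := (hi q).symm

theorem i_al (n k : ℕ) (i : DN →+* KK) (hi : ∀ c, kap c = i (TrivSqZeroExt.inl c)) :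
    i (al n k) = bet (i ee) n k * i (TrivSqZeroExt.inl ((n.factorial:ℚ)^2) * ww n k) := by
  have h : kap (1/(n.factorial:ℚ)) * kap ((n.factorial:ℚ)^2) = kap (n.factorial:ℚ) := by
    rw [← map_mul]; congr 1
    have : (n.factorial:ℚ) ≠ 0 := by positivity
    field_simp
  rw [al, bet, map_mul, map_mul, map_mul, ← hi, ← hi, map_poch', ← h, Sx, map_add, map_natCast]
  ring

theorem fst_poch (k n : ℕ) : (poch (Sx k) n).fst = poch (k:ℚ) n := by
  induction n with
  | zero => simp [poch]
  | succ n ih => rw [poch_succ, poch_succ, TrivSqZeroExt.fst_mul, ih]; simp [fst_Sx]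

theorem poch_nat (k n : ℕ) : poch (k:ℚ) n * (k.factorial : ℚ) = ((n+k).factorial : ℚ) := by
  induction n with
  | zero => simp [poch]
  | succ n ih =>
    rw [poch_succ, show n + 1 + k = (n + k) + 1 by ring, Nat.factorial_succ]
    push_cast
    rw [← ih]; ring

theorem fst_al (n k : ℕ) : (al n k).fst = ((n+k).choose k * (n.choose k)^2 : ℕ) := by
  have h1 := poch_nat k n
  have h2 : ((n+k).choose k : ℚ) * (n.factorial * k.factorial) = (n+k).factorial := by
    have := Nat.add_choose_mul_factorial_mul_factorial n k
    rw [← mul_assoc]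
    exact_mod_cast this
  have hn : (n.factorial:ℚ) ≠ 0 := by positivity
  have hk : (k.factorial:ℚ) ≠ 0 := by positivity
  rw [al, TrivSqZeroExt.fst_mul, TrivSqZeroExt.fst_mul, fst_poch, fst_ww, TrivSqZeroExt.fst_inl]
  push_cast
  rw [← h2] at h1
  have h3 : poch (k:ℚ) n = (n+k).choose k * n.factorial := by
    apply mul_right_cancel₀ hk; rw [h1]; ring
  rw [h3]
  field_simp

theorem ee_fst : ee.fst = 0 := by simp [ee]
theorem ee_snd : ee.snd = 1 := by simp [ee]

theorem ISx_div (D : ℕ) (q : ℚ) (h : IZ (D * q)) : IS D (kap q * ix ee) := by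
  rw [kap_ix, ← map_mul]
  apply IS_ix
  · simpa [ee] using IZ_zero
  · simpa [ee] using h
theorem ISy_div (D : ℕ) (q : ℚ) (h : IZ (D * q)) : IS D (kap q * iy ee) := by
  rw [kap_iy, ← map_mul]
  apply IS_iy
  · simpa [ee] using IZ_zero
  · simpa [ee] using h

theorem al_ww (D n k : ℕ) (hD : ∀ j, 1 ≤ j → j ≤ n → j ∣ D) (hk : k ≤ n) :
    IZ (TrivSqZeroExt.inl ((n.factorial:ℚ)^2) * ww n k).fst ∧
    IZ (D * (TrivSqZeroExt.inl ((n.factorial:ℚ)^2) * ww n k).snd) := by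
  have hn : (n.factorial:ℚ) ≠ 0 := by positivity
  constructor
  · have : (TrivSqZeroExt.inl ((n.factorial:ℚ)^2) * ww n k).fst = ((n.choose k ^ 2 : ℕ):ℚ) := by
      rw [TrivSqZeroExt.fst_mul, fst_ww, TrivSqZeroExt.fst_inl]; push_cast; field_simp
    rw [this]; exact IZ_nat _
  · have : D * (TrivSqZeroExt.inl ((n.factorial:ℚ)^2) * ww n k).snd =
        ((2 * n.choose k ^ 2 : ℕ):ℚ) * (D * harmonic (n-k) + -(D * harmonic k)) := by
      rw [TrivSqZeroExt.snd_mul, fst_ww, snd_ww, TrivSqZeroExt.fst_inl, TrivSqZeroExt.snd_inl]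
      simp
      field_simp
      ring
    rw [this]
    exact (IZ_nat _).mul ((IZ_harm D n _ hD (by omega)).add (IZ_harm D n _ hD hk).neg)

theorem IS_al_x (D n k : ℕ) (hD : ∀ j, 1 ≤ j → j ≤ n → j ∣ D) (hk : k ≤ n) : IS D (ix (al n k)) := by
  rw [i_al n k ix kap_ix]
  refine IS.mul (bet_IS D n _ (fun j h1 h2 => ISx_div D _ ?_) n le_rfl k) (IS_ix (al_ww D n k hD hk).1 (al_ww D n k hD hk).2)
  rw [mul_one_div]; exact IZ_div (hD j h1 h2)
theorem IS_al_y (D n k : ℕ) (hD : ∀ j, 1 ≤ j → j ≤ n → j ∣ D) (hk : k ≤ n) : IS D (iy (al n k)) := by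
  rw [i_al n k iy kap_iy]
  refine IS.mul (bet_IS D n _ (fun j h1 h2 => ISy_div D _ ?_) n le_rfl k) (IS_iy (al_ww D n k hD hk).1 (al_ww D n k hD hk).2)
  rw [mul_one_div]; exact IZ_div (hD j h1 h2)

theorem IS_bet_xy (D n z : ℕ) (hD : ∀ j, 1 ≤ j → j ≤ n → j ∣ D) : IS D (bet (ix ee + iy ee) n z) := by
  refine bet_IS D n _ (fun j h1 h2 => ?_) n le_rfl z
  rw [mul_add]
  have : IZ ((D:ℚ) * (1/(j:ℚ))) := by rw [mul_one_div]; exact IZ_div (hD j h1 h2)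
  exact (ISx_div D _ this).add (ISy_div D _ this)

theorem trm_al (n k l : ℕ) : trm n k l = ix (al n k) * iy (al n l) * bet (ix ee + iy ee) n (k+l) := by
  have h : kap (n.factorial:ℚ) * kap (1/(n.factorial:ℚ)) = 1 := by
    rw [← map_mul, ← map_one kap]; congr 1
    have : (n.factorial:ℚ) ≠ 0 := by positivity
    field_simp
  have e : ((k+l:ℕ):KK) + (ix ee + iy ee) = ix (Sx k) + iy (Sx l) := by
    rw [Sx, Sx, map_add, map_add, map_natCast, map_natCast]; push_cast; ring
  rw [trm_eq, al, al, bet, e, map_mul, map_mul, map_mul, map_mul, map_poch', map_poch', ← kap_ix, ← kap_iy]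
  generalize poch (ix (Sx k)) n = P1
  generalize poch (iy (Sx l)) n = P2
  generalize poch (ix (Sx k) + iy (Sx l)) n = P3
  generalize ix (ww n k) = W1
  generalize iy (ww n l) = W2
  linear_combination (-kap (n.factorial:ℚ) * P1 * P2 * P3 * W1 * W2) * h

theorem iv_eq (z : ℕ) : iv z = kap (1/(z:ℚ)) * (1 - kap (1/(z:ℚ)) * ix ee - kap (1/(z:ℚ)) * iy ee
    + kap 2 * ((kap (1/(z:ℚ)) * ix ee) * (kap (1/(z:ℚ)) * iy ee))) := by
  rw [kap_apply, kap_apply, ix_apply, iy_apply, iv]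
  ext
  · simp [ee]
  · simp [ee]; ring
  · simp [ee]; ring
  · simp [ee]; ring

theorem ee_al_x (n k : ℕ) : ix ee * ix (al n k) = kap (al n k).fst * ix ee := by
  rw [kap_ix, ← map_mul, ← map_mul]; congr 1
  ext <;> simp [ee]
theorem ee_al_y (n k : ℕ) : iy ee * iy (al n k) = kap (al n k).fst * iy ee := by
  rw [kap_iy, ← map_mul, ← map_mul]; congr 1
  ext <;> simp [ee]

theorem IZ_al (D n k z : ℕ) (hD : ∀ j, 1 ≤ j → j ≤ n → j ∣ D) (hk : k ≤ n) (h1 : 1 ≤ z) (h2 : z ≤ n + k) :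
    IZ ((D:ℚ) * (1/(z:ℚ) * (al n k).fst)) := by
  rw [fst_al]
  have : (D:ℚ) * (1/(z:ℚ) * (((n+k).choose k * (n.choose k)^2 : ℕ):ℚ)) =
      ((D * (n+k).choose k : ℕ):ℚ) / z * ((n.choose k ^ 2:ℕ):ℚ) := by
    push_cast; ring
  rw [this]
  exact (IZ_div (key_dvd n k z D hD hk h1 h2)).mul (IZ_nat _)

theorem IS_iv (D n k l z : ℕ) (hD : ∀ j, 1 ≤ j → j ≤ n → j ∣ D) (hk : k ≤ n) (hl : l ≤ n) (h1 : 1 ≤ z)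
    (h2 : z ≤ k + l) :
    IS D (kap ((n.centralBinom:ℚ) * D) * (ix (al n k) * iy (al n l)) * iv z) := by
  have hC : IZ ((n.centralBinom:ℚ) * D * (1/(z:ℚ))) := by
    have := key_dvd n n z D hD le_rfl h1 (by omega)
    rw [← two_mul, mul_comm] at this
    rw [mul_one_div, Nat.centralBinom]
    exact_mod_cast IZ_div this
  have hx : IS D (kap (1/(z:ℚ) * (al n k).fst) * ix ee) := ISx_div D _ (IZ_al D n k z hD hk h1 (by omega))
  have hy : IS D (kap (1/(z:ℚ) * (al n l).fst) * iy ee) := ISy_div D _ (IZ_al D n l z hD hl h1 (by omega))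
  have hax := IS_al_x D n k hD hk
  have hay := IS_al_y D n l hD hl
  have e : kap ((n.centralBinom:ℚ) * D) * (ix (al n k) * iy (al n l)) * iv z =
      kap ((n.centralBinom:ℚ) * D * (1/(z:ℚ))) * (ix (al n k) * iy (al n l)
        - (kap (1/(z:ℚ) * (al n k).fst) * ix ee) * iy (al n l)
        - (kap (1/(z:ℚ) * (al n l).fst) * iy ee) * ix (al n k)
        + kap 2 * ((kap (1/(z:ℚ) * (al n k).fst) * ix ee) * (kap (1/(z:ℚ) * (al n l).fst) * iy ee))) := by
    have h1 := ee_al_x n k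
    have h2 := ee_al_y n l
    rw [iv_eq, map_mul kap (1/(z:ℚ)), map_mul kap (1/(z:ℚ)), map_mul kap _ (1/(z:ℚ))]
    generalize kap ((n.centralBinom:ℚ) * D) = c
    generalize kap (1/(z:ℚ)) = i
    rw [mul_assoc i (kap (al n k).fst), mul_assoc i (kap (al n l).fst), ← h1, ← h2]
    ring
  rw [e]
  have h2' : IS D (kap 2) := IS_kap ⟨2, by norm_num⟩
  exact (IS_kap hC).mul ((((hax.mul hay).sub (hx.mul hay)).sub (hy.mul hax)).add (h2'.mul (hx.mul hy)))

theorem IS_dinv_x (D n m : ℕ) (hD : ∀ j, 1 ≤ j → j ≤ n → j ∣ D) (h1 : 1 ≤ m) (h2 : m ≤ n) :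
    IS D (kap D * ix (dinv m)) := by
  have h := IZ_div (hD m h1 h2)
  rw [kap_ix, ← map_mul]
  apply IS_ix
  · convert h using 1; simp [dinv]; ring
  · convert (h.mul h).neg using 1; simp [dinv]; ring
theorem IS_dinv_y (D n m : ℕ) (hD : ∀ j, 1 ≤ j → j ≤ n → j ∣ D) (h1 : 1 ≤ m) (h2 : m ≤ n) :
    IS D (kap D * iy (dinv m)) := by
  have h := IZ_div (hD m h1 h2)
  rw [kap_iy, ← map_mul]
  apply IS_iy
  · convert h using 1; simp [dinv]; ring
  · convert (h.mul h).neg using 1; simp [dinv]; ring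

theorem IS_H2_x (D n k : ℕ) (hD : ∀ j, 1 ≤ j → j ≤ n → j ∣ D) (h2 : k ≤ n) :
    IS D (kap D ^ 2 * ix (H2 k)) := by
  rw [H2, map_sum, Finset.mul_sum]
  refine IS_sum _ _ fun j hj => ?_
  have := Finset.mem_range.1 hj
  have h := IS_dinv_x D n (j+1) hD (by omega) (by omega)
  convert h.mul h using 1
  rw [map_pow]; ring
theorem IS_H2_y (D n k : ℕ) (hD : ∀ j, 1 ≤ j → j ≤ n → j ∣ D) (h2 : k ≤ n) :
    IS D (kap D ^ 2 * iy (H2 k)) := by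
  rw [H2, map_sum, Finset.mul_sum]
  refine IS_sum _ _ fun j hj => ?_
  have := Finset.mem_range.1 hj
  have h := IS_dinv_y D n (j+1) hD (by omega) (by omega)
  convert h.mul h using 1
  rw [map_pow]; ring
theorem IS_H1_x (D n k : ℕ) (hD : ∀ j, 1 ≤ j → j ≤ n → j ∣ D) (h2 : k ≤ n) :
    IS D (kap D * ix (H1 k)) := by
  rw [H1, map_sum, Finset.mul_sum]
  refine IS_sum _ _ fun j hj => ?_
  have := Finset.mem_range.1 hj
  exact IS_dinv_x D n (j+1) hD (by omega) (by omega)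

theorem IS_F2 (D n k l : ℕ) (hD : ∀ j, 1 ≤ j → j ≤ n → j ∣ D) (hk : k ≤ n) (hl : l ≤ n) :
    IS D (kap ((n.centralBinom:ℚ) * D) * (ix (al n k) * iy (al n l)) * F2 k l) := by
  rw [F2, mul_sub, Finset.mul_sum]
  refine IS.sub (IS_sum _ _ fun m hm => ?_) ?_
  · have := Finset.mem_range.1 hm
    exact IS_iv D n k l (m+1) hD hk hl (by omega) (by omega)
  · have h := ((IS_kap (D := D) (IZ_nat n.centralBinom)).mul ((IS_al_x D n k hD hk).mul (IS_al_y D n l hD hl))).mul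
      (IS_H1_x D n k hD hk)
    convert h using 1
    rw [map_mul]; ring

theorem IS_F1 (D n k l : ℕ) (hD : ∀ j, 1 ≤ j → j ≤ n → j ∣ D) (hk : k ≤ n) (hl : l ≤ n) :
    IS D (kap ((n.centralBinom:ℚ) * D) * kap D ^ 2 * (ix (al n k) * iy (al n l)) * F1 k l) := by
  rw [F1, mul_sub, Finset.mul_sum, Finset.mul_sum]
  refine IS.sub (IS_sum _ _ fun m hm => ?_) (IS_sum _ _ fun m hm => ?_)
  · have := Finset.mem_range.1 hm
    have h := ((IS_kap (D := D) (IZ_nat n.centralBinom)).mul ((IS_al_x D n k hD hk).mul (IS_al_y D n l hD hl))).mul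
      ((IS_H2_y D n l hD hl).mul (IS_dinv_x D n (m+1) hD (by omega) (by omega)))
    have h' := (IS_iv D n k l (m+l+1) hD hk hl (by omega) (by omega)).mul
      ((IS_H2_y D n l hD hl).add (IS_H2_x D n m hD (by omega)))
    convert h.sub h' using 1
    rw [map_mul]; ring
  · have := Finset.mem_range.1 hm
    have h' := (IS_iv D n k l (m+1) hD hk hl (by omega) (by omega)).mul (IS_H2_y D n m hD (by omega))
    convert h' using 1
    ring

theorem yy_eq (c : ℚ) (F : ℕ → ℕ → KK) (n : ℕ) : c * yy F n = (-1)^(n+1) *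
    ∑ k ∈ Finset.range (n+1), ∑ l ∈ Finset.range (n+1), c * (n.centralBinom * TT (trm n k l * F k l)) := by
  rw [yy, Lam]
  simp only [← Finset.mul_sum]
  ring

theorem IZ_yy (c : ℚ) (F : ℕ → ℕ → KK) (n : ℕ)
    (h : ∀ k l, k ≤ n → l ≤ n → IZ (c * (n.centralBinom * TT (trm n k l * F k l)))) : IZ (c * yy F n) := by
  rw [yy_eq]
  refine IZ.mul ⟨(-1)^(n+1), by push_cast; ring⟩ (IZ_sum _ _ fun k hk => IZ_sum _ _ fun l hl => h k l ?_ ?_)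
  · have := Finset.mem_range.1 hk; omega
  · have := Finset.mem_range.1 hl; omega

theorem IZ_F0 (n : ℕ) : IZ (yy F0 n) := by
  rw [← one_mul (yy F0 n)]
  refine IZ_yy 1 F0 n fun k l hk hl => ?_
  rw [one_mul]
  refine (IZ_nat _).mul ?_
  have hD : ∀ j, 1 ≤ j → j ≤ n → j ∣ Dlcm n := fun j h1 h2 => dvd_Dlcm h1 h2
  have h : IS (Dlcm n) (trm n k l) := by
    rw [trm_al]
    exact ((IS_al_x _ n k hD hk).mul (IS_al_y _ n l hD hl)).mul (IS_bet_xy _ n _ hD)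
  convert h.1 using 1
  rw [F0, TT_apply, ix_apply, iy_apply]
  simp [ee]

theorem IZ_F2 (n : ℕ) : IZ ((Dlcm n : ℚ)^3 * yy F2 n) := by
  refine IZ_yy _ F2 n fun k l hk hl => ?_
  have hD : ∀ j, 1 ≤ j → j ≤ n → j ∣ Dlcm n := fun j h1 h2 => dvd_Dlcm h1 h2
  have h := (IS_F2 _ n k l hD hk hl).mul (IS_bet_xy _ n (k+l) hD)
  have e : kap ((n.centralBinom:ℚ) * Dlcm n) * (ix (al n k) * iy (al n l)) * F2 k l * bet (ix ee + iy ee) n (k+l)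
     = kap ((n.centralBinom:ℚ) * Dlcm n) * (trm n k l * F2 k l) := by rw [trm_al]; ring
  rw [e] at h
  have h4 := h.2.2.2
  rw [← TT_apply, TT_kap] at h4
  convert h4 using 1
  ring

theorem IZ_F1 (n : ℕ) : IZ ((Dlcm n : ℚ)^5 * yy F1 n) := by
  refine IZ_yy _ F1 n fun k l hk hl => ?_
  have hD : ∀ j, 1 ≤ j → j ≤ n → j ∣ Dlcm n := fun j h1 h2 => dvd_Dlcm h1 h2
  have h := (IS_F1 _ n k l hD hk hl).mul (IS_bet_xy _ n (k+l) hD)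
  have e : kap ((n.centralBinom:ℚ) * Dlcm n) * kap (Dlcm n) ^ 2 * (ix (al n k) * iy (al n l)) * F1 k l
      * bet (ix ee + iy ee) n (k+l)
     = kap ((n.centralBinom:ℚ) * Dlcm n * (Dlcm n)^2) * (trm n k l * F1 k l) := by
    rw [trm_al, map_mul kap (_ * _), map_pow]; ring
  rw [e] at h
  have h4 := h.2.2.2
  rw [← TT_apply, TT_kap] at h4
  convert h4 using 1
  ring

/-- For all `n ≥ 1` one has `q_n ∈ ℤ`, `2 D_n^5 p_n ∈ ℤ` and `2 D_n^3 p̃_n ∈ ℤ`,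
with `D_n = lcm(1, 2, …, n)`. -/
theorem stmt5
    (q p pt : ℕ → ℚ)
    (hq : Rec1 q) (hp : Rec1 p) (hpt : Rec1 pt)
    (hq0 : q 0 = -1) (hq1 : q 1 = 42) (hq2 : q 2 = -17934)
    (hp0 : p 0 = 0) (hp1 : p 1 = 87/2) (hp2 : p 2 = -1190161/64)
    (hpt0 : pt 0 = 0) (hpt1 : pt 1 = 101/2) (hpt2 : pt 2 = -344923/16) :
    ∀ n : ℕ, 1 ≤ n →
      (∃ z : ℤ, q n = (z : ℚ)) ∧
      (∃ z : ℤ, 2 * (Dlcm n : ℚ)^5 * p n = (z : ℚ)) ∧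
      (∃ z : ℤ, 2 * (Dlcm n : ℚ)^3 * pt n = (z : ℚ)) := by
  intro n _
  have e0 := rec_unique q (yy F0) 1 hq (yy_rec good0) (by rw [hq0, yy00]; norm_num)
    (by rw [hq1, yy01]; norm_num) (by rw [hq2, yy02]; norm_num) n
  have e1 := rec_unique p (yy F1) 2 hp (yy_rec good1) (by rw [hp0, yy10]; norm_num)
    (by rw [hp1, yy11]; norm_num) (by rw [hp2, yy12]; norm_num) n
  have e2 := rec_unique pt (yy F2) 2 hpt (yy_rec good2) (by rw [hpt0, yy20]; norm_num)
    (by rw [hpt1, yy21]; norm_num) (by rw [hpt2, yy22]; norm_num) n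
  refine ⟨?_, ?_, ?_⟩
  · obtain ⟨z, hz⟩ := IZ_F0 n
    exact ⟨z, by rw [← hz, ← e0, one_mul]⟩
  · obtain ⟨z, hz⟩ := IZ_F1 n
    exact ⟨z, by rw [← hz, ← e1]; ring⟩
  · obtain ⟨z, hz⟩ := IZ_F2 n
    exact ⟨z, by rw [← hz, ← e2]; ring⟩
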